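/- arXiv:2411.01323 — 2 statements merged into one kernel-verified Lean document; each statement's English description precedes it below -/
import Mathlib

section
/- Let K be a field with char K ≠ 2, W a finite-dimensional vector space over K, φ ∈ GL(W), and σ ∈ GL(W) an involution with σφσ⁻¹ = φ⁻¹. Then W = W₁ ⊕ … ⊕ W_m, where each W_j is invariant under both φ and σ, and each W_j either is indecomposable as a K[x]-module (x acting as φ), or satisfies W_j = X_j ⊕ X_jσ for some φ-invariant subspace X_j that is indecomposable as a K[x]-module. -/
open Polynomial Module

namespace Biref

variable {K V : Type*} [Field K] [AddCommGroup V] [Module K V]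

/-- The orthogonal group of a bilinear form: all linear automorphisms preserving `f`. -/
def orthGroup (f : LinearMap.BilinForm K V) : Subgroup (V ≃ₗ[K] V) where
  carrier := {φ | ∀ x y : V, f (φ x) (φ y) = f x y}
  one_mem' := fun _ _ => rfl
  mul_mem' := by
    intro a b ha hb x y
    simpa using (ha (b x) (b y)).trans (hb x y)
  inv_mem' := by
    intro a ha x y
    show f (a.symm x) (a.symm y) = f x y
    conv_rhs => rw [← a.apply_symm_apply x, ← a.apply_symm_apply y]
    exact (ha _ _).symm

/-- The special orthogonal group: isometries of determinant 1. -/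
def specialOrthGroup (f : LinearMap.BilinForm K V) : Subgroup (V ≃ₗ[K] V) where
  carrier := {φ | (∀ x y : V, f (φ x) (φ y) = f x y) ∧
      LinearMap.det (φ : V →ₗ[K] V) = 1}
  one_mem' := ⟨fun _ _ => rfl, by simp⟩
  mul_mem' := by
    rintro a b ⟨ha, ha'⟩ ⟨hb, hb'⟩
    refine ⟨fun x y => by simpa using (ha (b x) (b y)).trans (hb x y), ?_⟩
    rw [LinearEquiv.coe_toLinearMap_mul, map_mul, ha', hb', one_mul]
  inv_mem' := by
    rintro a ⟨ha, ha'⟩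
    refine ⟨fun x y => ?_, ?_⟩
    · show f (a.symm x) (a.symm y) = f x y
      conv_rhs => rw [← a.apply_symm_apply x, ← a.apply_symm_apply y]
      exact (ha _ _).symm
    · have h1 : LinearMap.det ((a⁻¹ * a : V ≃ₗ[K] V) : V →ₗ[K] V) = 1 := by
        rw [inv_mul_cancel, LinearEquiv.coe_toLinearMap_one, LinearMap.det_id]
      rw [LinearEquiv.coe_toLinearMap_mul, map_mul, ha', mul_one] at h1
      exact h1

/-- The commutator subgroup `Ω(V)` of the orthogonal group. -/
def omegaGroup (f : LinearMap.BilinForm K V) : Subgroup (V ≃ₗ[K] V) :=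
  ⁅orthGroup f, orthGroup f⁆

/-- `g` is a product of two involutions lying in the subgroup `H`. -/
def IsBireflectionalIn {G : Type*} [Group G] (H : Subgroup G) (g : G) : Prop :=
  ∃ σ τ : G, σ ∈ H ∧ τ ∈ H ∧ σ ^ 2 = 1 ∧ τ ^ 2 = 1 ∧ g = σ * τ

/-- `g` is bireflectional in the group `G`. -/
def IsBireflectional {G : Type*} [Group G] (g : G) : Prop :=
  ∃ σ τ : G, σ ^ 2 = 1 ∧ τ ^ 2 = 1 ∧ g = σ * τ

/-- `g` is reversed by some element of `H`. -/
def IsReversibleIn {G : Type*} [Group G] (H : Subgroup G) (g : G) : Prop :=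
  ∃ α : G, α ∈ H ∧ α * g * α⁻¹ = g⁻¹

/-- A subspace is invariant under an endomorphism. -/
def Invt (ψ : V →ₗ[K] V) (U : Submodule K V) : Prop :=
  ∀ x ∈ U, ψ x ∈ U

/-- The discriminant of a (finite-dimensional, nondegenerate) bilinear space is the class
of `d` in `K*/(K*)²`: some Gram determinant equals `d` times a nonzero square. -/
def HasDisc (f : LinearMap.BilinForm K V) (d : K) : Prop :=
  ∃ (b : Basis (Fin (Module.finrank K V)) K V) (c : Kˣ),
    (Matrix.of fun i j => f (b i) (b j)).det = d * (c : K) ^ 2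

/-- A nondegenerate symmetric bilinear space is hyperbolic iff its Witt index is half its
dimension, i.e. there is a totally isotropic subspace of half the dimension. -/
def IsHyperbolicSpace (f : LinearMap.BilinForm K V) : Prop :=
  ∃ W : Submodule K V, (∀ x ∈ W, ∀ y ∈ W, f x y = 0) ∧
    2 * Module.finrank K W = Module.finrank K V

/-- The multiplicity of `p ^ d` as an elementary divisor of `φ`. -/
noncomputable def edMult (φ : Module.End K V) (p : K[X]) (d : ℕ) : ℕ :=
  (2 * Module.finrank K (LinearMap.ker (Polynomial.aeval φ p ^ d))
    - Module.finrank K (LinearMap.ker (Polynomial.aeval φ p ^ (d + 1)))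
    - Module.finrank K (LinearMap.ker (Polynomial.aeval φ p ^ (d - 1)))) / p.natDegree

/-- `n_j(φ)`: the number of elementary divisors `(x ± 1) ^ d` of `φ` with `d ≡ j mod 8`,
counted with multiplicity. -/
noncomputable def nPM [FiniteDimensional K V] (φ : Module.End K V) (j : ℕ) : ℕ :=
  ∑ d ∈ Finset.range (Module.finrank K V + 1),
    if d % 8 = j % 8 then edMult φ (X - 1) d + edMult φ (X + 1) d else 0

/-- The Fitting one space `Bahn^∞(ψ) = ⋂ⱼ im (ψ - 1)^j`. -/
noncomputable def bahnInf (ψ : Module.End K V) : Submodule K V :=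
  ⨅ j : ℕ, LinearMap.range ((ψ - 1) ^ j)

/-- The `K[x]`-submodule generated by `v` (`x` acting as `ψ`). -/
def cycSub (ψ : Module.End K V) (v : V) : Submodule K V :=
  Submodule.span K (Set.range fun n : ℕ => (ψ ^ n) v)

/-- `V` is a cyclic `K[x]`-module, `x` acting as `ψ`. -/
def IsCyclicEnd (ψ : Module.End K V) : Prop :=
  ∃ v : V, cycSub ψ v = ⊤

/-- `V` is a direct sum of two cyclic `K[x]`-submodules, `x` acting as `ψ`. -/
def IsBicyclicEnd (ψ : Module.End K V) : Prop :=
  ∃ v w : V, cycSub ψ v ⊓ cycSub ψ w = ⊥ ∧ cycSub ψ v ⊔ cycSub ψ w = ⊤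

/-- `V` is an indecomposable `K[x]`-module, `x` acting as `ψ`. -/
def ModIndec (ψ : Module.End K V) : Prop :=
  (⊥ : Submodule K V) ≠ ⊤ ∧
    ¬∃ A B : Submodule K V, Invt ψ A ∧ Invt ψ B ∧ A ≠ ⊥ ∧ B ≠ ⊥ ∧ A ⊓ B = ⊥ ∧ A ⊔ B = ⊤

/-- `ψ` is orthogonally indecomposable w.r.t. `f`: `V ≠ 0` and the only nondegenerate
invariant subspaces are `0` and `V`. -/
def OrthIndec (f : LinearMap.BilinForm K V) (ψ : Module.End K V) : Prop :=
  (⊥ : Submodule K V) ≠ ⊤ ∧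
    ∀ U : Submodule K V, Invt ψ U → (f.restrict U).Nondegenerate → U = ⊥ ∨ U = ⊤

/-- The Witt index: the dimension of a maximal totally isotropic subspace. -/
noncomputable def wittIndex (f : LinearMap.BilinForm K V) : ℕ :=
  sSup {n | ∃ W : Submodule K V, (∀ x ∈ W, ∀ y ∈ W, f x y = 0) ∧ Module.finrank K W = n}


theorem semi_aeval {V' : Type*} [AddCommGroup V'] [Module K V'] (s : V →ₗ[K] V')
    (a : V →ₗ[K] V) (b : V' →ₗ[K] V') (h : ∀ x, s (a x) = b (s x)) (f : K[X]) (x : V) :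
    s (aeval (R := K) (A := Module.End K V) a f x)
      = aeval (R := K) (A := Module.End K V') b f (s x) := by
  induction f using Polynomial.induction_on' generalizing x with
  | add p q hp hq => simp [hp, hq]
  | monomial n c =>
    have : ∀ (n : ℕ) (x : V), s ((a ^ n : Module.End K V) x) = (b ^ n : Module.End K V') (s x) := by
      intro n
      induction n with
      | zero => simp
      | succ n ih => intro x; simp [pow_succ, ih, h]
    simp [aeval_monomial, this, Module.algebraMap_end_apply]

/-- Cyclic submodule generated by `v`. -/
noncomputable def cyc (φ : Module.End K V) (v : V) : Submodule K V :=
  LinearMap.range ((LinearMap.applyₗ v) ∘ₗ (aeval (R := K) φ).toLinearMap)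

theorem mem_cyc {φ : Module.End K V} {v x : V} : x ∈ cyc φ v ↔ ∃ f : K[X], aeval φ f v = x := by
  simp [cyc, LinearMap.mem_range]

theorem aeval_mul_apply (φ : Module.End K V) (f g : K[X]) (v : V) :
    aeval φ (f * g) v = aeval φ f (aeval φ g v) := by
  simp

theorem self_mem_cyc (φ : Module.End K V) (v : V) : v ∈ cyc φ v := mem_cyc.2 ⟨1, by simp⟩

theorem aeval_mem_cyc (φ : Module.End K V) (v : V) (f : K[X]) {x : V} (hx : x ∈ cyc φ v) :
    aeval φ f x ∈ cyc φ v := by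
  obtain ⟨g, rfl⟩ := mem_cyc.1 hx
  exact mem_cyc.2 ⟨f * g, by simp⟩

theorem invt_cyc (φ : Module.End K V) (v : V) : Invt φ (cyc φ v) := fun x hx => by
  simpa using aeval_mem_cyc φ v X hx

theorem invt_aeval {φ : Module.End K V} {A : Submodule K V} (h : Invt φ A) (f : K[X]) :
    Invt (aeval (R := K) φ f) A := by
  intro x hx
  have := semi_aeval A.subtype (LinearMap.restrict φ h) φ (fun x => rfl) f ⟨x, hx⟩
  simp only [Submodule.subtype_apply] at this
  rw [← this]
  exact Submodule.coe_mem _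

/-- `v` has annihilator generated by `p ^ n`. -/
def PP (φ : Module.End K V) (v : V) (p : K[X]) (n : ℕ) : Prop :=
  Irreducible p ∧ n ≠ 0 ∧ ∀ f : K[X], aeval φ f v = 0 ↔ p ^ n ∣ f

theorem PP.inverse {φ : Module.End K V} {v : V} {p : K[X]} {n : ℕ} (h : PP φ v p n)
    {f : K[X]} (hf : ¬ p ∣ f) : ∃ a : K[X], aeval φ (a * f) v = v := by
  have hc : IsCoprime f (p ^ n) := ((h.1.coprime_iff_not_dvd.2 hf).pow_left).symm
  obtain ⟨a, b, hab⟩ := hc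
  refine ⟨a, ?_⟩
  have h0 := (h.2.2 (b * p ^ n)).2 (Dvd.intro_left _ rfl)
  have h1 : a * f = 1 - b * p ^ n := by rw [← hab]; ring
  rw [h1, map_sub, LinearMap.sub_apply, h0]; simp

theorem PP.split {φ : Module.End K V} {v : V} {p : K[X]} {n : ℕ} (h : PP φ v p n)
    {f g : K[X]} {c : K} (hc : c ≠ 0) (hfg : aeval φ f v + aeval φ g v = c • v) :
    ¬ p ∣ f ∨ ¬ p ∣ g := by
  by_contra! hh
  have h1 : aeval φ (f + g - C c) v = 0 := by
    simp [hfg, Module.algebraMap_end_apply]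
  have h2 : p ∣ f + g - C c := (dvd_pow_self p h.2.1).trans ((h.2.2 _).1 h1)
  have h3 : p ∣ C c := by
    have := dvd_sub (dvd_add hh.1 hh.2) h2
    simpa using this
  exact h.1.not_isUnit (isUnit_of_dvd_unit h3 (isUnit_C.2 hc.isUnit))

theorem PP.modIndec {φ : Module.End K V} {v : V} {p : K[X]} {n : ℕ} (h : PP φ v p n)
    {X : Submodule K V} (hX : X = cyc φ v) (hi : Invt φ X) : ModIndec (LinearMap.restrict φ hi) := by
  subst hX
  have hv : v ≠ 0 := by
    rintro rfl
    have := (h.2.2 1).1 (by simp)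
    exact h.1.not_isUnit (isUnit_of_dvd_one ((dvd_pow_self p h.2.1).trans this))
  have key : ∀ (A : Submodule K (cyc φ v)), Invt (LinearMap.restrict φ hi) A → ∀ a ∈ A,
      ∀ f : K[X], aeval φ f v = a → ¬ p ∣ f → A = ⊤ := by
    intro A hA a ha f hfa hpf
    obtain ⟨c, hc⟩ := h.inverse hpf
    rw [eq_top_iff]
    rintro ⟨x, hx⟩ -
    obtain ⟨k, rfl⟩ := mem_cyc.1 hx
    have := invt_aeval hA (k * c) a ha
    have e := semi_aeval (cyc φ v).subtype (LinearMap.restrict φ hi) φ (fun x => rfl) (k * c) a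
    convert this
    rw [Submodule.subtype_apply] at e
    rw [e]
    simp only [Submodule.subtype_apply]
    rw [← hfa, aeval_mul_apply, ← aeval_mul_apply φ c, hc]
  refine ⟨fun hbt => hv ?_, ?_⟩
  · have : (⟨v, self_mem_cyc φ v⟩ : cyc φ v) ∈ (⊥ : Submodule K (cyc φ v)) := hbt ▸ Submodule.mem_top
    simpa using this
  · rintro ⟨A, B, hA, hB, hA0, hB0, hAB, hT⟩
    have hm : (⟨v, self_mem_cyc φ v⟩ : cyc φ v) ∈ A ⊔ B := hT ▸ Submodule.mem_top
    obtain ⟨a, ha, b, hb, hab⟩ := Submodule.mem_sup.1 hm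
    obtain ⟨f, hf⟩ := mem_cyc.1 a.2
    obtain ⟨g, hg⟩ := mem_cyc.1 b.2
    have hs : aeval φ f v + aeval φ g v = (1 : K) • v := by
      rw [hf, hg, one_smul]; exact congrArg Subtype.val hab
    rcases h.split one_ne_zero hs with h1 | h1
    · rw [key A hA a ha f hf h1, top_inf_eq] at hAB
      exact hB0 hAB
    · rw [key B hB b hb g hg h1, inf_top_eq] at hAB
      exact hA0 hAB

theorem exists_summand [FiniteDimensional K V] [Nontrivial V] (φ : Module.End K V) :
    ∃ (v : V) (p : K[X]) (n : ℕ) (e : V →ₗ[K] V), PP φ v p n ∧ (∀ x, e (φ x) = φ (e x)) ∧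
      e v = v ∧ ∀ x, e x ∈ cyc φ v := by
  classical
  obtain ⟨ι, _, p, hp, n, ⟨E⟩⟩ := Module.equiv_directSum_of_isTorsion
    (Module.AEval.isTorsion_of_finiteDimensional K V φ)
  have : ∃ i, n i ≠ 0 := by
    by_contra! hn
    have hs : ∀ i, Subsingleton (K[X] ⧸ K[X] ∙ p i ^ n i) := fun i => by
      rw [hn i, pow_zero]
      exact Submodule.Quotient.subsingleton_iff.2 (Ideal.span_singleton_one)
    have : Subsingleton (DirectSum ι fun i => K[X] ⧸ K[X] ∙ p i ^ n i) :=
      ⟨fun a b => DFinsupp.ext fun i => Subsingleton.elim _ _⟩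
    have h2 : Subsingleton V :=
      ((Module.AEval.of K V φ).toEquiv.trans E.toEquiv).subsingleton
    exact not_subsingleton V h2
  obtain ⟨i, hi⟩ := this
  let o := Module.AEval.of K V φ
  let q := fun i => K[X] ∙ p i ^ n i
  let L : (K[X] ⧸ q i) →ₗ[K[X]] Module.AEval K V φ :=
    E.symm.toLinearMap ∘ₗ DirectSum.lof K[X] ι (fun i => K[X] ⧸ q i) i
  let P : Module.AEval K V φ →ₗ[K[X]] (K[X] ⧸ q i) :=
    DirectSum.component K[X] ι (fun i => K[X] ⧸ q i) i ∘ₗ E.toLinearMap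
  have hPL : ∀ y, P (L y) = y := by
    intro y
    simp only [P, L, LinearMap.comp_apply, LinearEquiv.coe_coe, LinearEquiv.apply_symm_apply]
    exact DirectSum.component.lof_self K[X] (M := fun i => K[X] ⧸ q i) i y
  have hmk : ∀ y : K[X] ⧸ q i, ∃ f : K[X], y = f • (Submodule.Quotient.mk 1 : K[X] ⧸ q i) := by
    intro y
    obtain ⟨f, rfl⟩ := Submodule.Quotient.mk_surjective _ y
    exact ⟨f, by rw [← Submodule.Quotient.mk_smul]; simp⟩
  let v : V := o.symm (L (Submodule.Quotient.mk 1))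
  have ha : ∀ (f : K[X]), aeval φ f v = o.symm (L (f • (Submodule.Quotient.mk 1 : K[X] ⧸ q i))) := by
    intro f
    rw [map_smul]
    rfl
  refine ⟨v, p i, n i, o.symm.toLinearMap ∘ₗ (L ∘ₗ P).restrictScalars K ∘ₗ o.toLinearMap,
    ⟨hp i, hi, ?_⟩, ?_, ?_, ?_⟩
  · intro f
    rw [ha, LinearEquiv.map_eq_zero_iff, ← Submodule.Quotient.mk_smul, ← Ideal.mem_span_singleton]
    have hinj : Function.Injective L := Function.LeftInverse.injective hPL
    rw [map_eq_zero_iff L hinj, Submodule.Quotient.mk_eq_zero]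
    simp [q, Ideal.span]
  · intro x
    have : o (φ x) = (X : K[X]) • o x := (Module.AEval.X_smul_of φ x).symm
    simp only [LinearMap.comp_apply, LinearEquiv.coe_coe, LinearMap.restrictScalars_apply, this,
      map_smul]
    exact Module.AEval.of_symm_X_smul φ _
  · simp [v, hPL]
  · intro x
    obtain ⟨f, hf⟩ := hmk (P (o x))
    refine mem_cyc.2 ⟨f, ?_⟩
    rw [ha, ← hf]
    simp

theorem compl_of_scalar {φ σ : Module.End K V} {A : Submodule K V} (s : V →ₗ[K] V) {c : K}
    (hc : c ≠ 0) (hsφ : ∀ x, s (φ x) = φ (s x)) (hsσ : ∀ x, s (σ x) = σ (s x))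
    (hr : ∀ x, s x ∈ A) (hA : ∀ x ∈ A, s x = c • x) :
    ∃ B, Invt φ B ∧ Invt σ B ∧ IsCompl A B := by
  refine ⟨LinearMap.ker s, ?_, ?_, ?_, ?_⟩
  · intro x hx
    rw [LinearMap.mem_ker] at hx ⊢
    rw [hsφ, hx, map_zero]
  · intro x hx
    rw [LinearMap.mem_ker] at hx ⊢
    rw [hsσ, hx, map_zero]
  · rw [Submodule.disjoint_def]
    intro x hx hx'
    have := hA x hx
    rw [LinearMap.mem_ker.1 hx'] at this
    exact (smul_eq_zero.1 this.symm).resolve_left hc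
  · rw [codisjoint_iff, eq_top_iff]
    intro x _
    refine Submodule.mem_sup.2 ⟨c⁻¹ • s x, A.smul_mem _ (hr x), x - c⁻¹ • s x, ?_, by simp⟩
    rw [LinearMap.mem_ker, map_sub, map_smul, hA _ (hr x), smul_smul, inv_mul_cancel₀ hc]
    simp

/-- The concrete good pieces. -/
def GoodC (φ σ : Module.End K V) (A : Submodule K V) : Prop :=
  ∃ v p n, PP φ v p n ∧ (A = cyc φ v ∨
    (cyc φ v ⊔ (cyc φ v).map σ = A ∧ cyc φ v ⊓ (cyc φ v).map σ = ⊥))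

theorem GoodC.ne_bot {φ σ : Module.End K V} {A : Submodule K V} (h : GoodC φ σ A) : A ≠ ⊥ := by
  rintro rfl
  obtain ⟨v, p, n, h, hh⟩ := h
  have hv : v ∈ (⊥ : Submodule K V) := by
    rcases hh with hh | hh
    · rw [hh]; exact self_mem_cyc _ _
    · rw [← hh.1]; exact Submodule.mem_sup_left (self_mem_cyc _ _)
  rw [Submodule.mem_bot] at hv
  subst hv
  have := (h.2.2 1).1 (by simp)
  exact h.1.not_isUnit (isUnit_of_dvd_one ((dvd_pow_self p h.2.1).trans this))

theorem key_split [FiniteDimensional K V] [Nontrivial V] (h2 : (2 : K) ≠ 0) (φ σ : Module.End K V)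
    (hσ : ∀ x, σ (σ x) = x) (hrev : ∀ x, φ (σ (φ x)) = σ x) :
    ∃ A B, Invt φ A ∧ Invt σ A ∧ Invt φ B ∧ Invt σ B ∧ IsCompl A B ∧ GoodC φ σ A := by
  obtain ⟨v, p, n, e, hv, heφ, hev, her⟩ := exists_summand φ
  let ψ : Module.End K V := σ * φ * σ
  have hψ : ∀ x, ψ x = σ (φ (σ x)) := fun x => rfl
  have hφψ : ∀ x, φ (ψ x) = x := fun x => by rw [hψ, hrev, hσ]
  have hψφ : ∀ x, ψ (φ x) = x := fun x => by rw [hψ, hrev, hσ]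
  have hφi : Function.Injective φ := Function.LeftInverse.injective hψφ
  have hinv : ∀ A : Submodule K V, Invt φ A → Invt ψ A := by
    intro A hA x hx
    have h1 : A.map φ ≤ A := by
      rintro _ ⟨y, hy, rfl⟩; exact hA y hy
    have h3 : A.map φ = A := Submodule.eq_of_le_of_finrank_eq h1
      (LinearEquiv.finrank_map_eq (LinearEquiv.ofInjectiveEndo φ hφi) A)
    rw [← h3] at hx
    obtain ⟨y, hy, rfl⟩ := hx
    rw [hψφ]; exact hy
  have hcomm : ∀ (s : V →ₗ[K] V), (∀ x, s (φ x) = φ (s x)) → ∀ x, s (ψ x) = ψ (s x) := by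
    intro s hs x
    apply hφi
    rw [← hs, hφψ, hφψ]
  have hσφ : ∀ x, σ (φ x) = ψ (σ x) := fun x => by rw [hψ, hσ]
  have hσψ : ∀ x, σ (ψ x) = φ (σ x) := fun x => by rw [hψ, hσ]
  -- averaging
  have hav : ∀ (s : V →ₗ[K] V), (∀ x, s (φ x) = φ (s x)) →
      (∀ x, (s + σ * s * σ : Module.End K V) (φ x) = φ ((s + σ * s * σ : Module.End K V) x)) ∧
      (∀ x, (s + σ * s * σ : Module.End K V) (σ x) = σ ((s + σ * s * σ : Module.End K V) x)) := by
    intro s hs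
    constructor
    · intro x
      simp only [LinearMap.add_apply, Module.End.mul_apply, map_add, hs, hσφ, hcomm s hs, hσψ]
    · intro x
      simp only [LinearMap.add_apply, Module.End.mul_apply, map_add, hσ]
      exact add_comm _ _
  have heid : ∀ x ∈ cyc φ v, e x = x := by
    intro x hx
    obtain ⟨f, rfl⟩ := mem_cyc.1 hx
    rw [semi_aeval e φ φ heφ, hev]
  obtain ⟨h, hh⟩ := mem_cyc.1 (invt_aeval (hinv _ (invt_cyc φ v)) p v (self_mem_cyc φ v))
  have hcp : ∀ (f g : K[X]) x, aeval φ f (aeval ψ g x) = aeval ψ g (aeval φ f x) := by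
    intro f g x
    refine semi_aeval (aeval φ f) ψ ψ ?_ g x
    exact hcomm _ fun x => (semi_aeval φ φ φ (fun _ => rfl) f x).symm
  by_cases hph : p ∣ h
  · -- self-dual case
    obtain ⟨k, rfl⟩ := hph
    have h1 : ∀ m : ℕ, aeval ψ (p ^ m) v = aeval φ (p ^ m * k ^ m) v := by
      intro m
      induction m with
      | zero => simp
      | succ m ih =>
        rw [pow_succ, aeval_mul_apply, ← hh, ← hcp, ih, ← aeval_mul_apply]
        congr 2
        ring
    have h3 : aeval φ (p ^ n) (σ v) = 0 := by
      rw [← semi_aeval σ ψ φ hσψ, h1, (hv.2.2 _).2 (Dvd.intro _ rfl), map_zero]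
    have h4 : aeval φ (p ^ n) v = 0 := (hv.2.2 _).2 dvd_rfl
    obtain ⟨d, hd, f, hf, hpf⟩ : ∃ d : K, d * d = 1 ∧ ∃ f : K[X],
        aeval φ f v = e (v + d • σ v) ∧ ¬ p ∣ f := by
      obtain ⟨f, hf⟩ := mem_cyc.1 (her (v + (1 : K) • σ v))
      obtain ⟨g, hg⟩ := mem_cyc.1 (her (v + (-1 : K) • σ v))
      rcases hv.split h2 (f := f) (g := g) (by
        rw [hf, hg, ← map_add]
        have : v + (1 : K) • σ v + (v + (-1 : K) • σ v) = (2 : K) • v := by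
          rw [two_smul, one_smul, neg_one_smul]; abel
        rw [this, map_smul, hev]) with h5 | h5
      · exact ⟨1, by ring, f, hf, h5⟩
      · exact ⟨-1, by ring, g, hg, h5⟩
    set u := v + d • σ v with hu
    have hσu : σ u = d • u := by
      rw [hu, map_add, map_smul, hσ, smul_add, smul_smul, hd, one_smul, add_comm]
    obtain ⟨a, ha⟩ := hv.inverse hpf
    have heu : ∀ k : K[X], e (aeval φ k u) = aeval φ (k * f) v := by
      intro k
      rw [semi_aeval e φ φ heφ, ← hf, aeval_mul_apply]
    have hpu : aeval φ (p ^ n) u = 0 := by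
      rw [hu, map_add, map_smul, h3, h4, smul_zero, add_zero]
    have hU : PP φ u p n := by
      refine ⟨hv.1, hv.2.1, fun k => ⟨fun hk => ?_, ?_⟩⟩
      · have h5 := heu k
        rw [hk, map_zero] at h5
        have h6 := (hv.2.2 _).1 h5.symm
        exact (hv.1.coprime_iff_not_dvd.2 hpf).pow_left.dvd_of_dvd_mul_right h6
      · rintro ⟨c, rfl⟩
        rw [mul_comm, aeval_mul_apply, hpu, map_zero]
    have hcompl : IsCompl (cyc φ u) (LinearMap.ker e) := by
      constructor
      · rw [Submodule.disjoint_def]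
        intro x hx hx'
        obtain ⟨k, rfl⟩ := mem_cyc.1 hx
        have h5 := heu k
        rw [LinearMap.mem_ker.1 hx'] at h5
        have h6 := (hv.2.2 _).1 h5.symm
        exact (hU.2.2 _).2 ((hv.1.coprime_iff_not_dvd.2 hpf).pow_left.dvd_of_dvd_mul_right h6)
      · rw [codisjoint_iff, eq_top_iff]
        intro x _
        obtain ⟨k, hk⟩ := mem_cyc.1 (her x)
        refine Submodule.mem_sup.2 ⟨aeval φ (k * a) u, mem_cyc.2 ⟨_, rfl⟩,
          x - aeval φ (k * a) u, ?_, by simp⟩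
        rw [LinearMap.mem_ker, map_sub, heu, mul_assoc, aeval_mul_apply, ha, hk, sub_self]
    have hσc : Invt σ (cyc φ u) := by
      intro x hx
      obtain ⟨k, rfl⟩ := mem_cyc.1 hx
      rw [semi_aeval σ φ ψ hσφ, hσu, map_smul]
      exact Submodule.smul_mem _ _
        (invt_aeval (hinv _ (invt_cyc φ u)) k u (self_mem_cyc φ u))
    let e1 := (cyc φ u).projection (LinearMap.ker e) hcompl
    have he1r : ∀ x, e1 x ∈ cyc φ u := fun x => Submodule.projection_apply_mem hcompl x
    have he1i : ∀ x ∈ cyc φ u, e1 x = x := fun x hx =>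
      Submodule.projection_apply_of_mem_left hcompl hx
    have he1φ : ∀ x, e1 (φ x) = φ (e1 x) := by
      intro x
      have h5 : e (x - e1 x) = 0 := LinearMap.mem_ker.1 (Submodule.sub_projection_mem hcompl x)
      have h6 : φ (x - e1 x) ∈ LinearMap.ker e := by
        rw [LinearMap.mem_ker, heφ, h5, map_zero]
      have h7 : e1 (φ (x - e1 x)) = 0 := (Submodule.projection_apply_eq_zero_iff hcompl).2 h6
      rw [map_sub, map_sub, sub_eq_zero] at h7
      rw [h7]
      exact he1i _ (invt_cyc φ u _ (he1r x))
    obtain ⟨B, hB1, hB2, hB3⟩ := compl_of_scalar (φ := φ) (σ := σ) (A := cyc φ u)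
      (e1 + σ * e1 * σ : Module.End K V) h2 (hav e1 he1φ).1 (hav e1 he1φ).2
      (fun x => Submodule.add_mem _ (he1r x) (hσc _ (he1r _)))
      (fun x hx => by
        simp only [LinearMap.add_apply, Module.End.mul_apply]
        rw [he1i x hx, he1i _ (hσc x hx), hσ, two_smul])
    exact ⟨_, B, invt_cyc φ u, hσc, hB1, hB2, hB3, u, p, n, hU, Or.inl rfl⟩
  · obtain ⟨a, ha⟩ := hv.inverse hph
    have h1 : ∀ m : ℕ, aeval φ (a ^ m) (aeval ψ (p ^ m) v) = v := by
      intro m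
      induction m with
      | zero => simp
      | succ m ih =>
        rw [pow_succ p, aeval_mul_apply, ← hh, ← hcp, pow_succ', aeval_mul_apply,
          ← aeval_mul_apply φ (a ^ m), mul_comm (a ^ m), aeval_mul_apply, ih,
          ← aeval_mul_apply, ha]
    have h4 : aeval φ (p ^ n) v = 0 := (hv.2.2 _).2 dvd_rfl
    have h3 : ∀ x ∈ cyc φ v, e (σ x) = 0 := by
      intro x hx
      obtain ⟨k, rfl⟩ := mem_cyc.1 hx
      have h5 : aeval φ k v = aeval ψ (p ^ n) (aeval φ (k * a ^ n) v) := by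
        rw [← hcp, aeval_mul_apply, h1]
      rw [h5, semi_aeval σ ψ φ hσψ, semi_aeval e φ φ heφ]
      obtain ⟨l, hl⟩ := mem_cyc.1 (her (σ (aeval φ (k * a ^ n) v)))
      rw [← hl, ← aeval_mul_apply, mul_comm, aeval_mul_apply, h4, map_zero]
    have hiA : Invt φ (cyc φ v ⊔ (cyc φ v).map σ) := by
      intro x hx
      obtain ⟨y, hy, _, ⟨z, hz, rfl⟩, rfl⟩ := Submodule.mem_sup.1 hx
      rw [map_add, ← hσψ]
      exact Submodule.add_mem_sup (invt_cyc φ v y hy)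
        (Submodule.mem_map_of_mem (hinv _ (invt_cyc φ v) z hz))
    have hiσ : Invt σ (cyc φ v ⊔ (cyc φ v).map σ) := by
      intro x hx
      obtain ⟨y, hy, _, ⟨z, hz, rfl⟩, rfl⟩ := Submodule.mem_sup.1 hx
      rw [map_add, hσ, add_comm]
      exact Submodule.add_mem_sup hz (Submodule.mem_map_of_mem hy)
    obtain ⟨B, hB1, hB2, hB3⟩ := compl_of_scalar (φ := φ) (σ := σ)
      (A := cyc φ v ⊔ (cyc φ v).map σ)
      (e + σ * e * σ : Module.End K V) one_ne_zero (hav e heφ).1 (hav e heφ).2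
      (fun x => Submodule.add_mem_sup (her x) (Submodule.mem_map_of_mem (her _)))
      (fun x hx => by
        obtain ⟨y, hy, _, ⟨z, hz, rfl⟩, rfl⟩ := Submodule.mem_sup.1 hx
        simp only [LinearMap.add_apply, Module.End.mul_apply, map_add, hσ]
        rw [heid y hy, h3 z hz, h3 y hy, heid z hz]
        simp)
    refine ⟨_, B, hiA, hiσ, hB1, hB2, hB3, v, p, n, hv, Or.inr ⟨rfl, ?_⟩⟩
    rw [eq_bot_iff]
    rintro _ ⟨hx, ⟨z, hz, rfl⟩⟩
    rw [Submodule.mem_bot, ← heid _ hx]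
    exact h3 z hz

theorem cyc_map {φ : Module.End K V} {U : Submodule K V} (h : Invt φ U) (v : U) :
    (cyc (LinearMap.restrict φ h) v).map U.subtype = cyc φ (v : V) := by
  have e := fun f : K[X] => semi_aeval U.subtype (LinearMap.restrict φ h) φ (fun x => rfl) f v
  ext x
  constructor
  · rintro ⟨y, hy, rfl⟩
    obtain ⟨f, rfl⟩ := mem_cyc.1 hy
    exact mem_cyc.2 ⟨f, (e f).symm⟩
  · intro hx
    obtain ⟨f, rfl⟩ := mem_cyc.1 hx
    exact ⟨_, mem_cyc.2 ⟨f, rfl⟩, e f⟩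

theorem goodC_map {φ σ : Module.End K V} {U : Submodule K V} (h : Invt φ U) (h' : Invt σ U)
    {A : Submodule K U} (hA : GoodC (LinearMap.restrict φ h) (LinearMap.restrict σ h') A) :
    GoodC φ σ (A.map U.subtype) := by
  obtain ⟨v, p, n, hv, hh⟩ := hA
  refine ⟨v, p, n, ⟨hv.1, hv.2.1, fun f => ?_⟩, ?_⟩
  · rw [← hv.2.2]
    have e := semi_aeval U.subtype (LinearMap.restrict φ h) φ (fun x => rfl) f v
    simp only [Submodule.subtype_apply] at e
    rw [← e, Submodule.coe_eq_zero]
  · have hm : (cyc φ (v : V)).map σ =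
        ((cyc (LinearMap.restrict φ h) v).map (LinearMap.restrict σ h')).map U.subtype := by
      rw [← cyc_map h v, ← Submodule.map_comp, ← Submodule.map_comp]
      rfl
    rcases hh with rfl | ⟨rfl, hd⟩
    · exact Or.inl (cyc_map h v)
    · right
      rw [hm, ← cyc_map h v]
      refine ⟨(Submodule.map_sup _ _ _).symm, ?_⟩
      rw [← Submodule.map_inf _ (Submodule.subtype_injective U), hd, Submodule.map_bot]

theorem invt_map {φ : Module.End K V} {U : Submodule K V} (h : Invt φ U)
    {A : Submodule K U} (hA : Invt (LinearMap.restrict φ h) A) : Invt φ (A.map U.subtype) := by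
  rintro _ ⟨y, hy, rfl⟩
  exact ⟨_, hA y hy, rfl⟩

theorem decomp [FiniteDimensional K V] (h2 : (2 : K) ≠ 0) (φ σ : Module.End K V)
    (hσ : ∀ x, σ (σ x) = x) (hrev : ∀ x, φ (σ (φ x)) = σ x) (N : ℕ) :
    ∀ U : Submodule K V, finrank K U ≤ N → Invt φ U → Invt σ U →
    ∃ (m : ℕ) (F : Fin m → Submodule K V), iSupIndep F ∧ (⨆ i, F i) = U ∧
      ∀ i, Invt φ (F i) ∧ Invt σ (F i) ∧ GoodC φ σ (F i) := by
  induction N with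
  | zero =>
    intro U hU _ _
    refine ⟨0, fun i => i.elim0, fun i => i.elim0, ?_, fun i => i.elim0⟩
    rw [iSup_of_empty]
    exact (Submodule.finrank_eq_zero.1 (Nat.le_zero.1 hU)).symm
  | succ N ih =>
    intro U hU h h'
    by_cases hb : U = ⊥
    · exact ⟨0, fun i => i.elim0, fun i => i.elim0, by rw [iSup_of_empty, hb], fun i => i.elim0⟩
    have : Nontrivial U := Submodule.nontrivial_iff_ne_bot.2 hb
    obtain ⟨A, B, hA1, hA2, hB1, hB2, hc, hg⟩ := key_split h2 (LinearMap.restrict φ h)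
      (LinearMap.restrict σ h') (fun x => Subtype.ext (hσ x)) (fun x => Subtype.ext (hrev x))
    have hBt : B ≠ ⊤ := by
      rintro rfl
      exact hg.ne_bot (by simpa using hc.disjoint)
    have hlt : finrank K (B.map U.subtype) < finrank K U := by
      rw [Submodule.finrank_map_subtype_eq]
      exact Submodule.finrank_lt hBt
    obtain ⟨m, F, hF1, hF2, hF3⟩ := ih (B.map U.subtype) (by omega) (invt_map h hB1)
      (invt_map h' hB2)
    have hsup : A.map U.subtype ⊔ B.map U.subtype = U := by
      rw [← Submodule.map_sup, hc.sup_eq_top, Submodule.map_subtype_top]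
    have hdis : Disjoint (A.map U.subtype) (B.map U.subtype) := by
      rw [disjoint_iff, ← Submodule.map_inf _ (Submodule.subtype_injective U), hc.inf_eq_bot,
        Submodule.map_bot]
    refine ⟨m + 1, Fin.cons (A.map U.subtype) F, ?_, ?_, ?_⟩
    · intro i
      refine Fin.cases ?_ (fun i => ?_) i
      · refine hdis.mono_right (iSup₂_le fun j => ?_)
        refine Fin.cases (fun hj => (hj rfl).elim) (fun j _ => ?_) j
        rw [← hF2]
        exact le_iSup F j
      · have h3 : Disjoint (F i ⊔ ⨆ j, ⨆ (_ : j ≠ i), F j) (A.map U.subtype) :=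
          hdis.symm.mono_left (by
            rw [← hF2]
            exact sup_le (le_iSup F i) (iSup₂_le fun j _ => le_iSup F j))
        refine ((hF1 i).disjoint_sup_right_of_disjoint_sup_left h3).mono_right
          (iSup₂_le fun j => ?_)
        refine Fin.cases (fun _ => le_sup_right) (fun j hj => ?_) j
        exact le_sup_of_le_left (le_iSup₂_of_le j (fun h => hj (by rw [h])) le_rfl)
    · refine Eq.trans ?_ hsup
      rw [← hF2]
      apply le_antisymm
      · refine iSup_le fun j => ?_
        refine Fin.cases le_sup_left (fun j => ?_) j
        exact le_sup_of_le_right (le_iSup F j)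
      · refine sup_le ?_ (iSup_le fun j => ?_)
        · exact le_iSup (Fin.cons (A.map U.subtype) F : Fin (m + 1) → Submodule K V) 0
        · exact le_iSup (Fin.cons (A.map U.subtype) F : Fin (m + 1) → Submodule K V) j.succ
    · intro i
      refine Fin.cases ?_ (fun i => ?_) i
      · exact ⟨invt_map h hA1, invt_map h' hA2, goodC_map h h' hg⟩
      · exact hF3 i

/-- If `σ ∈ GL(W)` is an involution reversing `φ ∈ GL(W)`, then `W` is a
direct sum of `φ`- and `σ`-invariant subspaces, each either indecomposable as a
`K[x]`-module or of the form `X ⊕ Xσ` with `X` an indecomposable `K[x]`-submodule. -/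
theorem stmt18 {W : Type*} [AddCommGroup W] [Module K W] [FiniteDimensional K W]
    (hK : ringChar K ≠ 2)
    (φ σ : W ≃ₗ[K] W) (hσ2 : σ ^ 2 = 1) (hrev : σ * φ * σ⁻¹ = φ⁻¹) :
    ∃ (m : ℕ) (U : Fin m → Submodule K W),
      iSupIndep U ∧ (⨆ i, U i) = ⊤ ∧
      ∀ i, ∃ hUi : Invt (φ : W →ₗ[K] W) (U i),
        Invt (σ : W →ₗ[K] W) (U i) ∧
        (ModIndec ((φ : W →ₗ[K] W).restrict hUi) ∨
          ∃ (Xj : Submodule K W) (hXj : Invt (φ : W →ₗ[K] W) Xj),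
            ModIndec ((φ : W →ₗ[K] W).restrict hXj) ∧
            Xj ⊔ Xj.map (σ : W →ₗ[K] W) = U i ∧
            Xj ⊓ Xj.map (σ : W →ₗ[K] W) = ⊥) := by
  have h2 : (2 : K) ≠ 0 := Ring.two_ne_zero hK
  have hσ : ∀ x, σ (σ x) = x := fun x => by
    have := congrArg (fun g : W ≃ₗ[K] W => g x) hσ2
    simpa [pow_two] using this
  have hrev' : ∀ x, φ (σ (φ x)) = σ x := fun x => by
    have h1 : φ * (σ * φ) = σ := by
      rw [mul_inv_eq_iff_eq_mul.1 hrev, mul_inv_cancel_left]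
    exact congrArg (fun g : W ≃ₗ[K] W => g x) h1
  obtain ⟨m, F, hF1, hF2, hF3⟩ := decomp h2 (φ : W →ₗ[K] W) (σ : W →ₗ[K] W) hσ hrev' _ ⊤ le_rfl
    (fun _ _ => trivial) (fun _ _ => trivial)
  refine ⟨m, F, hF1, hF2, fun i => ⟨(hF3 i).1, (hF3 i).2.1, ?_⟩⟩
  obtain ⟨v, p, n, hv, hh | hh⟩ := (hF3 i).2.2
  · exact Or.inl (hv.modIndec hh _)
  · exact Or.inr ⟨_, invt_cyc _ v, hv.modIndec rfl _, hh.1, hh.2⟩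

end Biref
end

section
/- Let K be a field with char K ≠ 2, V a finite-dimensional vector space over K, and φ ∈ SL(V) such that αφα⁻¹ = φ⁻¹ for some α ∈ GL(V). Then the following are equivalent: (1) if dim V ≡ 2 (mod 4), then φ has an elementary divisor (x − 1)^d or (x + 1)^d with d odd; (2) φ = στ for some σ, τ ∈ SL(V) with σ² = τ² = 1. -/
open Polynomial Module

namespace Biref

variable {K V : Type*} [Field K] [AddCommGroup V] [Module K V]

universe u


lemma detInv [FiniteDimensional K V] (σ : Module.End K V) (hσ : σ * σ = 1) :
    LinearMap.det σ = (-1)^(finrank K V - finrank K (LinearMap.ker (σ - 1))) := by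
  set W := LinearMap.ker (σ - 1) with hW
  have hWm : ∀ x, x ∈ W ↔ σ x = x := fun x => by
    rw [hW, LinearMap.mem_ker, LinearMap.sub_apply, sub_eq_zero]; rfl
  have e : W ≤ W.comap σ := fun x hx => by
    rw [Submodule.mem_comap, (hWm x).1 hx]; exact hx
  have hss : ∀ x, σ (σ x) = x := fun x => by
    have := LinearMap.congr_fun hσ x; simpa using this
  rw [LinearMap.det_eq_det_mul_det W σ e]
  have h1 : σ.restrict e = LinearMap.id := by
    ext x; exact (hWm x).1 x.2
  have h3 : W.mapQ W σ e = (-1 : K) • LinearMap.id := by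
    ext x
    simp only [LinearMap.coe_comp, Function.comp_apply, Submodule.mkQ_apply, Submodule.mapQ_apply,
      LinearMap.smul_apply, LinearMap.id_apply]
    rw [← Submodule.Quotient.mk_smul, Submodule.Quotient.eq, hWm]
    simp [hss, add_comm]
  rw [h1, h3, LinearMap.det_id, LinearMap.det_smul, LinearMap.det_id, Submodule.finrank_quotient]
  simp

lemma finKey [FiniteDimensional K V] (f : Module.End K V) (S : Submodule K V) :
    finrank K (S.map f) + finrank K (S ⊓ LinearMap.ker f : Submodule K V) = finrank K S := by
  have := LinearMap.finrank_range_add_finrank_ker (f.domRestrict S)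
  rw [LinearMap.range_domRestrict] at this
  rw [← this]
  congr 1
  rw [LinearMap.ker_domRestrict]
  have e := Submodule.map_comap_subtype S (LinearMap.ker f)
  rw [← e]
  exact (Submodule.equivMapOfInjective S.subtype S.injective_subtype _).symm.finrank_eq

lemma finL [FiniteDimensional K V] (f : Module.End K V) (A B C D : Submodule K V)
    (h1 : A.map f ≤ C) (h2 : D ≤ C) (h3 : ∀ a ∈ A, f a ∈ D → a ∈ B) :
    finrank K A + finrank K D ≤ finrank K B + finrank K C := by
  have hA := finKey f A
  have hB := finKey f (A ⊓ D.comap f)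
  have e1 : A ⊓ D.comap f ⊓ LinearMap.ker f = A ⊓ LinearMap.ker f := by
    ext x
    simp only [Submodule.mem_inf, Submodule.mem_comap, LinearMap.mem_ker]
    constructor
    · rintro ⟨⟨a, b⟩, c⟩; exact ⟨a, c⟩
    · rintro ⟨a, c⟩; exact ⟨⟨a, by rw [c]; exact D.zero_mem⟩, c⟩
  have e2 : (A ⊓ D.comap f).map f = A.map f ⊓ D := by
    ext y
    constructor
    · rintro ⟨x, ⟨hx, hx'⟩, rfl⟩
      exact ⟨⟨x, hx, rfl⟩, hx'⟩
    · rintro ⟨⟨x, hx, rfl⟩, hy⟩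
      exact ⟨x, ⟨hx, hy⟩, rfl⟩
  have h4 := Submodule.finrank_sup_add_finrank_inf_eq (A.map f) D
  have h5 : finrank K (A.map f ⊔ D : Submodule K V) ≤ finrank K C :=
    Submodule.finrank_mono (sup_le h1 h2)
  have h6 : finrank K (A ⊓ D.comap f : Submodule K V) ≤ finrank K B :=
    Submodule.finrank_mono (fun x hx => h3 x hx.1 hx.2)
  rw [e1, e2] at hB
  omega

lemma finStable [FiniteDimensional K V] (h2 : (2:K) ≠ 0) (σ : Module.End K V) (hσ : σ * σ = 1)
    (A : Submodule K V) (hA : ∀ a ∈ A, σ a ∈ A) :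
    finrank K A = finrank K (A ⊓ LinearMap.ker (σ - 1) : Submodule K V) +
      finrank K (A ⊓ LinearMap.ker (σ + 1) : Submodule K V) := by
  have hss : ∀ x, σ (σ x) = x := fun x => by
    have := LinearMap.congr_fun hσ x; simpa using this
  rw [← Submodule.finrank_sup_add_finrank_inf_eq]
  have e1 : (A ⊓ LinearMap.ker (σ - 1)) ⊓ (A ⊓ LinearMap.ker (σ + 1)) = ⊥ := by
    rw [eq_bot_iff]
    rintro x ⟨⟨-, h⟩, ⟨-, h'⟩⟩
    have h : (σ - 1) x = 0 := h
    have h' : (σ + 1) x = 0 := h'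
    have : (2:K) • x = 0 := by
      have : (σ + 1) x - (σ - 1) x = 0 := by rw [h, h']; simp
      rw [← this]; simp [two_smul]
    exact (smul_eq_zero.1 this).resolve_left h2
  have e2 : (A ⊓ LinearMap.ker (σ - 1)) ⊔ (A ⊓ LinearMap.ker (σ + 1)) = A := by
    apply le_antisymm (sup_le inf_le_left inf_le_left)
    intro x hx
    rw [Submodule.mem_sup]
    refine ⟨(2:K)⁻¹ • (x + σ x), ⟨A.smul_mem _ (A.add_mem hx (hA x hx)), ?_⟩,
      (2:K)⁻¹ • (x - σ x), ⟨A.smul_mem _ (A.sub_mem hx (hA x hx)), ?_⟩, ?_⟩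
    · simp [hss, add_comm]
    · simp [hss]
    · rw [← smul_add, add_add_sub_cancel, ← two_smul K x, smul_smul, inv_mul_cancel₀ h2, one_smul]
  rw [e1, e2]; simp

/-- No odd blocks implies balanced. -/
lemma balanced [FiniteDimensional K V] (h2 : (2:K) ≠ 0) (σ N : Module.End K V) (hσ : σ * σ = 1)
    (hN : σ * N = - (N * σ))
    (hodd : ∀ d, Odd d → 2 * finrank K (LinearMap.ker (N ^ d)) ≤
      finrank K (LinearMap.ker (N ^ (d+1))) + finrank K (LinearMap.ker (N ^ (d-1)))) :
    2 * finrank K (LinearMap.ker (σ - 1)) = finrank K V := by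
  set P := LinearMap.ker (σ - 1) with hP
  set M := LinearMap.ker (σ + 1) with hM
  have hNs : ∀ x, σ (N x) = - N (σ x) := fun x => LinearMap.congr_fun hN x
  have mP : ∀ x, x ∈ P ↔ σ x = x := fun x => by
    rw [hP, LinearMap.mem_ker, LinearMap.sub_apply, sub_eq_zero]; rfl
  have mM : ∀ x, x ∈ M ↔ σ x = -x := fun x => by
    rw [hM, LinearMap.mem_ker, LinearMap.add_apply, add_eq_zero_iff_eq_neg]; rfl
  have NP : ∀ x ∈ P, N x ∈ M := fun x hx => by rw [mM, hNs, (mP x).1 hx]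
  have NM : ∀ x ∈ M, N x ∈ P := fun x hx => by rw [mP, hNs, (mM x).1 hx]; simp
  have mk : ∀ i x, x ∈ LinearMap.ker (N ^ (i+1)) ↔ N x ∈ LinearMap.ker (N ^ i) := fun i x => by
    rw [LinearMap.mem_ker, LinearMap.mem_ker, pow_succ]; rfl
  have hk : ∀ i, ∀ x ∈ LinearMap.ker (N ^ i), σ x ∈ LinearMap.ker (N ^ i) := by
    intro i
    induction i with
    | zero => intro x hx; simp at hx; simp [hx]
    | succ i ih =>
      intro x hx
      rw [mk] at hx ⊢
      have := ih _ hx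
      rw [hNs] at this
      simpa using this
  have hmono : ∀ i, LinearMap.ker (N ^ i) ≤ LinearMap.ker (N ^ (i+1)) := fun i x hx => by
    rw [LinearMap.mem_ker] at hx ⊢
    rw [pow_succ', Module.End.mul_apply, hx, map_zero]
  have hs : ∀ i, finrank K (LinearMap.ker (N ^ i)) =
      finrank K (LinearMap.ker (N ^ i) ⊓ P : Submodule K V) +
      finrank K (LinearMap.ker (N ^ i) ⊓ M : Submodule K V) :=
    fun i => finStable h2 σ hσ (LinearMap.ker (N ^ i)) (hk i)
  have hst : finrank K V = finrank K P + finrank K M := by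
    have := finStable h2 σ hσ ⊤ (fun _ _ => trivial)
    rwa [top_inf_eq, top_inf_eq, finrank_top] at this
  have ineq1 : ∀ i, finrank K (LinearMap.ker (N ^ (i+2)) ⊓ P : Submodule K V) +
      finrank K (LinearMap.ker (N ^ i) ⊓ M : Submodule K V) ≤
      finrank K (LinearMap.ker (N ^ (i+1)) ⊓ P : Submodule K V) +
      finrank K (LinearMap.ker (N ^ (i+1)) ⊓ M : Submodule K V) := by
    intro i
    apply finL N
    · rintro _ ⟨x, ⟨hx, hx'⟩, rfl⟩
      exact ⟨(mk _ _).1 hx, NP _ hx'⟩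
    · exact inf_le_inf_right _ (hmono i)
    · rintro x ⟨hx, hx'⟩ ⟨hy, -⟩
      exact ⟨(mk _ _).2 hy, hx'⟩
  have ineq2 : ∀ i, finrank K (LinearMap.ker (N ^ (i+2)) ⊓ M : Submodule K V) +
      finrank K (LinearMap.ker (N ^ i) ⊓ P : Submodule K V) ≤
      finrank K (LinearMap.ker (N ^ (i+1)) ⊓ M : Submodule K V) +
      finrank K (LinearMap.ker (N ^ (i+1)) ⊓ P : Submodule K V) := by
    intro i
    apply finL N
    · rintro _ ⟨x, ⟨hx, hx'⟩, rfl⟩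
      exact ⟨(mk _ _).1 hx, NM _ hx'⟩
    · exact inf_le_inf_right _ (hmono i)
    · rintro x ⟨hx, hx'⟩ ⟨hy, -⟩
      exact ⟨(mk _ _).2 hy, hx'⟩
  have hind : ∀ j, finrank K (LinearMap.ker (N ^ (2*j)) ⊓ P : Submodule K V) =
      finrank K (LinearMap.ker (N ^ (2*j)) ⊓ M : Submodule K V) := by
    intro j
    induction j with
    | zero =>
      have : LinearMap.ker (N ^ (2 * 0)) = ⊥ := by
        simp [Module.End.one_eq_id]
      rw [this, bot_inf_eq, bot_inf_eq]
    | succ j ih =>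
      have a1 := ineq1 (2*j)
      have a2 := ineq2 (2*j)
      have a3 := hodd (2*j+1) ⟨j, rfl⟩
      have b0 := hs (2*j)
      have b1 := hs (2*j+1)
      have b2 := hs (2*j+2)
      rw [show 2 * j + 1 + 1 = 2 * j + 2 from rfl, Nat.add_sub_cancel] at a3
      rw [show 2 * (j+1) = 2 * j + 2 from by ring]
      omega
  have hfin : LinearMap.ker (N ^ (2 * finrank K V + 1)) = LinearMap.ker (N ^ (2 * finrank K V)) := by
    rw [Module.End.ker_pow_eq_ker_pow_finrank_of_le (by omega : finrank K V ≤ 2 * finrank K V + 1),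
      Module.End.ker_pow_eq_ker_pow_finrank_of_le (by omega : finrank K V ≤ 2 * finrank K V)]
  have c1 := finL N P (LinearMap.ker (N ^ (2 * finrank K V)) ⊓ P) M
    (LinearMap.ker (N ^ (2 * finrank K V)) ⊓ M) (by rintro _ ⟨x, hx, rfl⟩; exact NP _ hx)
    inf_le_right (fun a ha hb => ⟨hfin.le ((mk _ _).2 hb.1), ha⟩)
  have c2 := finL N M (LinearMap.ker (N ^ (2 * finrank K V)) ⊓ M) P
    (LinearMap.ker (N ^ (2 * finrank K V)) ⊓ P) (by rintro _ ⟨x, hx, rfl⟩; exact NM _ hx)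
    inf_le_right (fun a ha hb => ⟨hfin.le ((mk _ _).2 hb.1), ha⟩)
  have c3 := hind (finrank K V)
  omega


lemma polyKey (p : K[X]) (hp : Irreducible p) (m : ℕ) (g : K[X]) (hg : ¬ p ^ (m+1) ∣ g) :
    ∃ h c : K[X], h * g + c * p ^ (m+1) = p ^ m := by
  classical
  have hd : EuclideanDomain.gcd g (p ^ (m+1)) ∣ p ^ (m+1) := EuclideanDomain.gcd_dvd_right _ _
  obtain ⟨i, hi, hA⟩ := (dvd_prime_pow hp.prime _).1 hd
  have him : i ≤ m := by
    by_contra h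
    have : i = m + 1 := by omega
    subst this
    exact hg (hA.symm.dvd.trans (EuclideanDomain.gcd_dvd_left _ _))
  obtain ⟨c, hc⟩ := hA.dvd.trans (pow_dvd_pow p him)
  have := EuclideanDomain.gcd_eq_gcd_ab g (p ^ (m+1))
  refine ⟨c * EuclideanDomain.gcdA g (p ^ (m+1)), c * EuclideanDomain.gcdB g (p ^ (m+1)), ?_⟩
  rw [hc]
  conv_rhs => rw [this]
  ring

noncomputable def ev (φ : Module.End K V) (v : V) : K[X] →ₗ[K] V :=
  (LinearMap.applyₗ v) ∘ₗ (aeval φ).toLinearMap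

lemma ev_apply (φ : Module.End K V) (v : V) (g : K[X]) : ev φ v g = aeval φ g v := rfl

def Wl (φ : Module.End K V) (ℓ : V →ₗ[K] K) : Submodule K V where
  carrier := {w | ∀ g : K[X], ℓ (aeval φ g w) = 0}
  zero_mem' := by intro g; simp
  add_mem' := by intro a b ha hb g; simp [ha g, hb g]
  smul_mem' := by intro c a ha g; simp [ha g]

lemma ann_dvd (φ : Module.End K V) (p : K[X]) (hp : Irreducible p) (m : ℕ) (v : V)
    (hv : aeval φ (p ^ (m+1)) v = 0) (hne : aeval φ (p ^ m) v ≠ 0) (g : K[X])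
    (hg : aeval φ g v = 0) : p ^ (m+1) ∣ g := by
  by_contra h
  obtain ⟨a, c, hac⟩ := polyKey p hp m g h
  apply hne
  rw [← hac]
  simp only [map_add, map_mul, LinearMap.add_apply, Module.End.mul_apply, hg, hv, map_zero, add_zero]

lemma splitting [FiniteDimensional K V] (φ : Module.End K V) (p : K[X]) (hp : Irreducible p) (m : ℕ)
    (v : V) (ℓ : V →ₗ[K] K) (hv : aeval φ (p ^ (m+1)) v = 0)
    (hℓ : ∀ x, ℓ (aeval φ (p ^ (m+1)) x) = 0) (hne : ℓ (aeval φ (p ^ m) v) ≠ 0) :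
    IsCompl (LinearMap.range (ev φ v)) (Wl φ ℓ) := by
  have hne' : aeval φ (p ^ m) v ≠ 0 := fun h => hne (by rw [h, map_zero])
  have hdisj : Disjoint (LinearMap.range (ev φ v)) (Wl φ ℓ) := by
    rw [Submodule.disjoint_def]
    rintro _ ⟨g, rfl⟩ hg
    rw [ev_apply] at hg ⊢
    by_cases h : p ^ (m+1) ∣ g
    · obtain ⟨c, rfl⟩ := h
      rw [mul_comm, map_mul, Module.End.mul_apply, hv, map_zero]
    · obtain ⟨a, c, hac⟩ := polyKey p hp m g h
      exfalso
      apply hne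
      have := hg a
      rw [← hac]
      simp only [map_add, map_mul, LinearMap.add_apply, Module.End.mul_apply, this, hv, map_zero,
        add_zero]
  let T : V →ₗ[K] Dual K K[X] :=
    { toFun := fun w => ℓ ∘ₗ ev φ w
      map_add' := by intro a b; ext g; simp [ev_apply]
      map_smul' := by intro c a; ext g; simp [ev_apply] }
  have hT : ∀ w g, T w g = ℓ (aeval φ g w) := fun _ _ => rfl
  have hker : LinearMap.ker T = Wl φ ℓ := by
    ext w
    rw [LinearMap.mem_ker]
    constructor
    · intro h g
      rw [← hT, h]; rfl
    · intro h
      exact LinearMap.ext fun g => h g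
  have hran : LinearMap.range T ≤ LinearMap.range (ev φ v).dualMap := by
    rw [LinearMap.range_dualMap_eq_dualAnnihilator_ker]
    rintro _ ⟨w, rfl⟩
    rw [Submodule.mem_dualAnnihilator]
    intro g hg
    obtain ⟨c, rfl⟩ := ann_dvd φ p hp m v hv hne' g hg
    rw [hT, map_mul, Module.End.mul_apply, hℓ]
  have hfd : FiniteDimensional K (LinearMap.range (ev φ v).dualMap) := by
    rw [LinearMap.range_dualMap_eq_dualAnnihilator_ker]
    exact Module.Finite.equiv ((((ev φ v).quotKerEquivRange).symm.dualMap).symm.trans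
      (Submodule.dualQuotEquivDualAnnihilator _)).symm.symm
  have h1 := LinearMap.finrank_range_add_finrank_ker T
  have h2 := Submodule.finrank_mono hran
  rw [LinearMap.finrank_range_dualMap_eq_finrank_range] at h2
  rw [hker] at h1
  have h3 := Submodule.finrank_sup_add_finrank_inf_eq (LinearMap.range (ev φ v)) (Wl φ ℓ)
  rw [hdisj.eq_bot, finrank_bot] at h3
  refine ⟨hdisj, codisjoint_iff.2 (Submodule.eq_top_of_finrank_eq ?_)⟩
  have := Submodule.finrank_le (LinearMap.range (ev φ v) ⊔ Wl φ ℓ)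
  omega

lemma finrank_ev [FiniteDimensional K V] (φ : Module.End K V) (p : K[X]) (hp : Irreducible p) (m : ℕ)
    (v : V) (hv : aeval φ (p ^ (m+1)) v = 0) (hne : aeval φ (p ^ m) v ≠ 0) :
    finrank K (LinearMap.range (ev φ v)) = (m+1) * p.natDegree := by
  have hk : LinearMap.ker (ev φ v) = (Ideal.span {p ^ (m+1)}).restrictScalars K := by
    ext g
    rw [LinearMap.mem_ker, Submodule.restrictScalars_mem, Ideal.mem_span_singleton]
    constructor
    · exact ann_dvd φ p hp m v hv hne g
    · rintro ⟨c, rfl⟩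
      rw [ev_apply, mul_comm, map_mul, Module.End.mul_apply, hv, map_zero]
  rw [← (ev φ v).quotKerEquivRange.finrank_eq, hk, ← natDegree_pow, ← finrank_quotient_span_eq_natDegree]
  rfl

lemma stab_inv [FiniteDimensional K V] (φ ψ : Module.End K V) (h : ψ * φ = 1) (A : Submodule K V)
    (hA : ∀ a ∈ A, φ a ∈ A) : ∀ a ∈ A, ψ a ∈ A := by
  intro a ha
  have hi : ∀ x, ψ (φ x) = x := fun x => LinearMap.congr_fun h x
  have inj : Function.Injective (φ.restrict hA) := by
    intro x y hxy
    have : φ x = φ y := congrArg Subtype.val hxy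
    ext
    rw [← hi x, this, hi]
  obtain ⟨b, hb⟩ := LinearMap.surjective_of_injective inj ⟨a, ha⟩
  have : φ b = a := congrArg Subtype.val hb
  rw [← this, hi]; exact b.2

lemma ev_stab (φ : Module.End K V) (v : V) : ∀ a ∈ LinearMap.range (ev φ v), φ a ∈ LinearMap.range (ev φ v) := by
  rintro _ ⟨g, rfl⟩
  exact ⟨X * g, by simp [ev_apply]⟩

lemma Wl_stab (φ : Module.End K V) (ℓ : V →ₗ[K] K) : ∀ a ∈ Wl φ ℓ, φ a ∈ Wl φ ℓ := by
  intro a ha g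
  have := ha (g * X)
  simpa using this

lemma aeval_stab (φ : Module.End K V) (A : Submodule K V)
    (hA : ∀ a ∈ A, φ a ∈ A) (g : K[X]) : ∀ a ∈ A, aeval φ g a ∈ A := by
  intro a ha
  induction g using Polynomial.induction_on' with
  | add p q hp hq => simp only [map_add, LinearMap.add_apply]; exact A.add_mem hp hq
  | monomial n c =>
    rw [aeval_monomial, Module.End.mul_apply, Module.algebraMap_end_apply]
    apply A.smul_mem
    induction n with
    | zero => simpa
    | succ n ih => rw [pow_succ', Module.End.mul_apply]; exact hA _ ih

lemma aeval_intertwine {W : Type*} [AddCommGroup W] [Module K W]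
    (φ : Module.End K V) (ψ : Module.End K W) (α : V →ₗ[K] W) (h : ∀ x, α (φ x) = ψ (α x)) (g : K[X]) (x : V) :
    α (aeval φ g x) = aeval ψ g (α x) := by
  induction g using Polynomial.induction_on' with
  | add p q hp hq => simp [hp, hq]
  | monomial n c =>
    simp only [aeval_monomial, Module.End.mul_apply, Module.algebraMap_end_apply, map_smul]
    congr 1
    induction n with
    | zero => simp
    | succ n ih => rw [pow_succ', pow_succ', Module.End.mul_apply, Module.End.mul_apply, h, ih]

/-- the inverse is a polynomial -/
lemma inv_poly [FiniteDimensional K V] (φ ψ : Module.End K V) (h : ψ * φ = 1) :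
    ∃ r : K[X], aeval φ r = ψ := by
  have hφψ : φ * ψ = 1 := mul_eq_one_comm.1 h
  have hint : IsIntegral K φ := Algebra.IsIntegral.isIntegral φ
  have hco : IsCoprime X (minpoly K φ) := by
    refine (irreducible_X.isCoprime_or_dvd _).resolve_right ?_
    rintro ⟨m, hm⟩
    have h0 := minpoly.aeval K φ
    rw [hm, map_mul, aeval_X] at h0
    have h1 : aeval φ m = 0 := by
      rw [← one_mul (aeval φ m), ← h, mul_assoc, h0, mul_zero]
    have hm0 : m ≠ 0 := by
      rintro rfl
      exact minpoly.ne_zero hint (by rw [hm, mul_zero])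
    have := natDegree_le_of_dvd (minpoly.dvd K φ h1) hm0
    rw [hm, natDegree_X_mul hm0] at this
    omega
  obtain ⟨a, b, hab⟩ := hco
  refine ⟨a, ?_⟩
  have := congrArg (aeval φ) hab
  simp only [map_add, map_mul, minpoly.aeval, mul_zero, add_zero, aeval_X, map_one] at this
  calc aeval φ a = aeval φ a * (φ * ψ) := by rw [hφψ, mul_one]
    _ = ψ := by rw [← mul_assoc, this, one_mul]

def Rev (φ ψ : Module.End K V) : Prop := ∃ σ : Module.End K V, σ * σ = 1 ∧ ∀ x, σ (φ x) = ψ (σ x)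

lemma ext_compl {W : Type*} [AddCommGroup W] [Module K W] {A B : Submodule K V} (h : IsCompl A B)
    (f g : V →ₗ[K] W) (hA : ∀ a ∈ A, f a = g a) (hB : ∀ a ∈ B, f a = g a) (x : V) : f x = g x := by
  have : x ∈ A ⊔ B := by rw [h.sup_eq_top]; trivial
  obtain ⟨a, ha, b, hb, rfl⟩ := Submodule.mem_sup.1 this
  rw [map_add, map_add, hA a ha, hB b hb]

lemma glue_aux (φ ψ σ : Module.End K V) {A B : Submodule K V} (h : IsCompl A B)
    (h1 : ∀ a ∈ A, σ (σ a) = a) (h2 : ∀ a ∈ B, σ (σ a) = a)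
    (h3 : ∀ a ∈ A, σ (φ a) = ψ (σ a)) (h4 : ∀ a ∈ B, σ (φ a) = ψ (σ a)) : Rev φ ψ :=
  ⟨σ, LinearMap.ext fun x => ext_compl h (σ * σ) 1 h1 h2 x,
    fun x => ext_compl h (σ * φ) (ψ * σ) h3 h4 x⟩

lemma glue (φ ψ : Module.End K V) {A B : Submodule K V} (h : IsCompl A B)
    (fA : ∀ a ∈ A, φ a ∈ A) (fB : ∀ a ∈ B, φ a ∈ B) (gA : ∀ a ∈ A, ψ a ∈ A) (gB : ∀ a ∈ B, ψ a ∈ B)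
    (hA : Rev (φ.restrict fA) (ψ.restrict gA)) (hB : Rev (φ.restrict fB) (ψ.restrict gB)) :
    Rev φ ψ := by
  obtain ⟨σ, s1, s2⟩ := hA
  obtain ⟨τ, t1, t2⟩ := hB
  have l : ∀ a : A, LinearMap.ofIsCompl h (A.subtype ∘ₗ σ) (B.subtype ∘ₗ τ) a = σ a := fun a => by
    rw [LinearMap.ofIsCompl_apply_left]; rfl
  have r : ∀ a : B, LinearMap.ofIsCompl h (A.subtype ∘ₗ σ) (B.subtype ∘ₗ τ) a = τ a := fun a => by
    rw [LinearMap.ofIsCompl_apply_right]; rfl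
  refine glue_aux φ ψ (LinearMap.ofIsCompl h (A.subtype ∘ₗ σ) (B.subtype ∘ₗ τ)) h ?_ ?_ ?_ ?_
  · intro a ha
    rw [l ⟨a, ha⟩, l]
    exact congrArg Subtype.val (LinearMap.congr_fun s1 ⟨a, ha⟩)
  · intro a ha
    rw [r ⟨a, ha⟩, r]
    exact congrArg Subtype.val (LinearMap.congr_fun t1 ⟨a, ha⟩)
  · intro a ha
    rw [l ⟨a, ha⟩, l ⟨φ a, fA a ha⟩]
    exact congrArg Subtype.val (s2 ⟨a, ha⟩)
  · intro a ha
    rw [r ⟨a, ha⟩, r ⟨φ a, fB a ha⟩]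
    exact congrArg Subtype.val (t2 ⟨a, ha⟩)

lemma two_functional (a b : V) (ha : a ≠ 0) (hb : b ≠ 0) : ∃ ℓ : V →ₗ[K] K, ℓ a ≠ 0 ∧ ℓ b ≠ 0 := by
  obtain ⟨f, hf, -⟩ := Submodule.exists_le_ker_of_notMem (K := K) (p := (⊥ : Submodule K V)) (v := a) (by simpa using ha)
  obtain ⟨g, hg, -⟩ := Submodule.exists_le_ker_of_notMem (K := K) (p := (⊥ : Submodule K V)) (v := b) (by simpa using hb)
  by_cases h1 : f b = 0
  · by_cases h2 : g a = 0
    · exact ⟨f + g, by simp [h2, hf], by simp [h1, hg]⟩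
    · exact ⟨g, h2, hg⟩
  · exact ⟨f, hf, h1⟩

lemma rev_swap (φ ψ α : Module.End K V) (h' : φ * ψ = 1)
    (hα : ∀ x, α (φ x) = ψ (α x)) : ∀ x, α (ψ x) = φ (α x) := by
  intro x
  have e1 : ∀ x, φ (ψ x) = x := fun x => LinearMap.congr_fun h' x
  rw [← e1 (α (ψ x)), ← hα, e1]

/-- primary case -/
lemma primary [FiniteDimensional K V] [Nontrivial V] (φ ψ α : Module.End K V) (h : ψ * φ = 1)
    (hi : Function.Injective α) (hα : ∀ x, α (φ x) = ψ (α x)) (p : K[X]) (hp : Irreducible p)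
    (hker : ∀ j x, aeval φ (p ^ j) x = 0 ↔ aeval ψ (p ^ j) x = 0) (n : ℕ)
    (hn : aeval φ (p ^ n) = 0) :
    ∃ U W : Submodule K V, IsCompl U W ∧ U ≠ ⊥ ∧ ∃ (fU : ∀ a ∈ U, φ a ∈ U) (fW : ∀ a ∈ W, φ a ∈ W)
      (gU : ∀ a ∈ U, ψ a ∈ U) (gW : ∀ a ∈ W, ψ a ∈ W), Rev (φ.restrict fU) (ψ.restrict gU) ∧
      ∃ β : Module.End K W, Function.Injective β ∧
        ∀ x, β (φ.restrict fW x) = ψ.restrict gW (β x) := by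
  classical
  have h' : φ * ψ = 1 := mul_eq_one_comm.1 h
  have hα' := rev_swap φ ψ α h' hα
  have hsur : Function.Surjective α := LinearMap.surjective_of_injective hi
  -- minimal exponent
  have hex : ∃ n : ℕ, aeval φ (p ^ n) = 0 := ⟨n, hn⟩
  obtain ⟨m, hm, hm'⟩ : ∃ m, aeval φ (p ^ (m+1)) = 0 ∧ aeval φ (p ^ m) ≠ 0 := by
    have h0 : Nat.find hex ≠ 0 := by
      intro h0
      have := Nat.find_spec hex
      rw [h0, pow_zero, map_one] at this
      exact (one_ne_zero : (1 : Module.End K V) ≠ 0) this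
    obtain ⟨m, hm⟩ := Nat.exists_eq_succ_of_ne_zero h0
    refine ⟨m, ?_, Nat.find_min hex (by omega)⟩
    have := Nat.find_spec hex
    rwa [hm] at this
  obtain ⟨v, hv⟩ : ∃ v, aeval φ (p ^ m) v ≠ 0 := by
    by_contra hc
    push Not at hc
    exact hm' (LinearMap.ext hc)
  have hv2 : aeval φ (p ^ m) (α v) ≠ 0 := by
    rw [← aeval_intertwine ψ φ α hα']
    intro h0
    rw [← map_zero α] at h0
    exact hv ((hker m v).2 (hi h0))
  obtain ⟨ℓ, l1, l2⟩ := two_functional (K := K) _ _ hv hv2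
  have c1 := splitting φ p hp m v ℓ (by rw [hm]; rfl) (by intro x; rw [hm]; simp) l1
  have c2 := splitting φ p hp m (α v) ℓ (by rw [hm]; rfl) (by intro x; rw [hm]; simp) l2
  have sU := ev_stab φ v
  have sU' := stab_inv φ ψ h _ sU
  have sU2 := stab_inv φ ψ h _ (ev_stab φ (α v))
  have sW := Wl_stab φ ℓ
  have sW' := stab_inv φ ψ h _ sW
  obtain ⟨r, hr⟩ := inv_poly φ ψ h
  have hr' : aeval ψ r = φ := by
    ext x
    obtain ⟨y, rfl⟩ := hsur x
    rw [← aeval_intertwine φ ψ α hα, hr, hα']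
  have hv0 : v ∈ LinearMap.range (ev φ v) := ⟨1, by simp [ev_apply]⟩
  refine ⟨_, _, c1, ?_, sU, sW, sU', sW', ?_, ?_⟩
  · intro hb
    rw [hb, Submodule.mem_bot] at hv0
    rw [hv0] at hv
    simp at hv
  · -- involution on cyclic
    have hle : LinearMap.ker (ev φ v) ≤ LinearMap.ker (ev ψ v) := by
      intro g hg
      obtain ⟨c, rfl⟩ := ann_dvd φ p hp m v (by rw [hm]; rfl) hv g hg
      obtain ⟨y, rfl⟩ := hsur v
      rw [LinearMap.mem_ker, ev_apply, ← aeval_intertwine φ ψ α hα, map_mul, hm]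
      simp
    let s0 : LinearMap.range (ev φ v) →ₗ[K] V :=
      (LinearMap.ker (ev φ v)).liftQ (ev ψ v) hle ∘ₗ (ev φ v).quotKerEquivRange.symm.toLinearMap
    have hs0 : ∀ (g : K[X]) (hg : ev φ v g ∈ LinearMap.range (ev φ v)), s0 ⟨ev φ v g, hg⟩ = aeval ψ g v := by
      intro g hg
      have : (ev φ v).quotKerEquivRange.symm ⟨ev φ v g, hg⟩ = Submodule.Quotient.mk g := by
        rw [LinearEquiv.symm_apply_eq]
        rfl
      simp only [s0, LinearMap.comp_apply, LinearEquiv.coe_coe]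
      rw [this]
      rfl
    have hs1 : ∀ u, s0 u ∈ LinearMap.range (ev φ v) := by
      rintro ⟨_, ⟨g, rfl⟩⟩
      rw [show s0 ⟨ev φ v g, ⟨g, rfl⟩⟩ = aeval ψ g v from hs0 g _]
      exact aeval_stab ψ _ sU' g v hv0
    refine ⟨s0.codRestrict _ hs1, ?_, ?_⟩
    · apply LinearMap.ext
      rintro ⟨_, ⟨g, rfl⟩⟩
      apply Subtype.ext
      have e : s0.codRestrict _ hs1 ⟨ev φ v g, ⟨g, rfl⟩⟩ =
          ⟨ev φ v (g.comp r), ⟨g.comp r, rfl⟩⟩ := by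
        apply Subtype.ext
        rw [LinearMap.codRestrict_apply]
        rw [show s0 ⟨ev φ v g, ⟨g, rfl⟩⟩ = aeval ψ g v from hs0 g _]
        simp only [ev_apply]
        rw [aeval_comp, hr]
      rw [Module.End.mul_apply, e, LinearMap.codRestrict_apply]
      refine (hs0 (g.comp r) _).trans ?_
      rw [aeval_comp, hr']
      rfl
    · rintro ⟨_, ⟨g, rfl⟩⟩
      apply Subtype.ext
      have e : (φ.restrict sU ⟨ev φ v g, ⟨g, rfl⟩⟩) = ⟨ev φ v (X * g), ⟨X * g, rfl⟩⟩ := by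
        apply Subtype.ext
        rw [LinearMap.coe_restrict_apply]
        simp [ev_apply]
      rw [e, LinearMap.codRestrict_apply]
      refine (hs0 (X * g) _).trans ?_
      rw [LinearMap.coe_restrict_apply,
        LinearMap.codRestrict_apply,
        show s0 ⟨ev φ v g, ⟨g, rfl⟩⟩ = aeval ψ g v from hs0 g _]
      simp
  · -- the complement
    refine ⟨(Submodule.projectionOnto _ _ c2.symm) ∘ₗ α ∘ₗ (Wl φ ℓ).subtype, ?_, ?_⟩
    · rw [injective_iff_map_eq_zero]
      rintro ⟨w, hw⟩ h0
      simp only [LinearMap.comp_apply, Submodule.subtype_apply, Submodule.projectionOnto_apply_eq_zero_iff] at h0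
      obtain ⟨g, hg⟩ := h0
      rw [ev_apply, ← aeval_intertwine ψ φ α hα'] at hg
      have hw' : w ∈ LinearMap.range (ev φ v) := by
        rw [← hi hg]
        exact aeval_stab ψ _ sU' g v hv0
      have := c1.disjoint.le_bot ⟨hw', hw⟩
      exact Subtype.ext this
    · rintro ⟨w, hw⟩
      apply Subtype.ext
      simp only [LinearMap.comp_apply, Submodule.subtype_apply, LinearMap.coe_restrict_apply, hα]
      refine ext_compl c2 ((Wl φ ℓ).subtype ∘ₗ Submodule.projectionOnto _ _ c2.symm ∘ₗ ψ)
        (ψ ∘ₗ (Wl φ ℓ).subtype ∘ₗ Submodule.projectionOnto _ _ c2.symm) ?_ ?_ (α w)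
      · intro a ha
        simp only [LinearMap.comp_apply, Submodule.subtype_apply]
        rw [(Submodule.projectionOnto_apply_eq_zero_iff c2.symm).2 ha,
          (Submodule.projectionOnto_apply_eq_zero_iff c2.symm).2 (sU2 a ha)]
        simp
      · intro a ha
        simp only [LinearMap.comp_apply, Submodule.subtype_apply]
        have e1 := Submodule.projectionOnto_apply_left c2.symm ⟨a, ha⟩
        have e2 := Submodule.projectionOnto_apply_left c2.symm ⟨ψ a, sW' a ha⟩
        simp only at e1 e2
        rw [e1, e2]

theorem exists_rev {K : Type*} [Field K] (n : ℕ) : ∀ (V : Type u) [AddCommGroup V] [Module K V]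
    [FiniteDimensional K V], finrank K V = n → ∀ φ ψ α : Module.End K V, ψ * φ = 1 →
    Function.Injective α → (∀ x, α (φ x) = ψ (α x)) → Rev φ ψ := by
  induction n using Nat.strong_induction_on with
  | _ n ih =>
  intro V _ _ _ hV φ ψ α h hi hα
  rcases subsingleton_or_nontrivial V with hsub | hnt
  · exact ⟨1, by simp, fun x => Subsingleton.elim _ _⟩
  have h' : φ * ψ = 1 := mul_eq_one_comm.1 h
  have hα' := rev_swap φ ψ α h' hα
  have hint : IsIntegral K φ := Algebra.IsIntegral.isIntegral φ
  obtain ⟨r, hr⟩ := inv_poly φ ψ h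
  obtain ⟨p, hp, c, hc⟩ := WfDvdMonoid.exists_irreducible_factor (minpoly.not_isUnit K φ)
    (minpoly.ne_zero hint)
  set q := p.comp r with hq
  have hqψ : aeval φ q = aeval ψ p := by rw [hq, aeval_comp, hr]
  have hqψn : ∀ j, aeval φ (q ^ j) = aeval ψ (p ^ j) := fun j => by rw [map_pow, map_pow, hqψ]
  have hα1 : ∀ j x, α (aeval φ (p ^ j) x) = aeval φ (q ^ j) (α x) := fun j x => by
    rw [hqψn]; exact aeval_intertwine φ ψ α hα _ x
  have hα2 : ∀ j x, α (aeval φ (q ^ j) x) = aeval φ (p ^ j) (α x) := fun j x => by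
    rw [hqψn]; exact aeval_intertwine ψ φ α hα' _ x
  have hker : ∃ x, aeval φ p x = 0 ∧ x ≠ 0 := by
    by_contra hcon
    push Not at hcon
    have hc0 : c ≠ 0 := by
      rintro rfl
      exact minpoly.ne_zero hint (by rw [hc, mul_zero])
    have h1 : aeval φ c = 0 := by
      ext x
      apply hcon
      rw [← Module.End.mul_apply, ← map_mul, ← hc, minpoly.aeval]; rfl
    have := natDegree_le_of_dvd (minpoly.dvd K φ h1) hc0
    rw [hc, natDegree_mul hp.ne_zero hc0] at this
    have := hp.natDegree_pos
    omega
  obtain ⟨x0, hx0, hx0'⟩ := hker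
  set S : Module.End K V := aeval φ (p * q) with hS
  have hSα : ∀ x, α (S x) = S (α x) := fun x => by
    have e1 := hα1 1
    have e2 := hα2 1
    simp only [pow_one] at e1 e2
    rw [hS]
    conv_rhs => rw [mul_comm]
    rw [map_mul, map_mul, Module.End.mul_apply, Module.End.mul_apply, e1, e2]
  have hSnα : ∀ k x, α ((S ^ k) x) = (S ^ k) (α x) := fun k x => by
    induction k with
    | zero => simp
    | succ k ihk => rw [pow_succ', Module.End.mul_apply, Module.End.mul_apply, hSα, ihk]
  have hSnφ : ∀ k x, φ ((S ^ k) x) = (S ^ k) (φ x) := fun k x => by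
    have : φ * S ^ k = S ^ k * φ := by
      conv_lhs => rw [← aeval_X (R := K) φ]
      conv_rhs => rw [← aeval_X (R := K) φ]
      rw [aeval_X, hS, ← map_pow]
      conv_lhs => lhs; rw [← aeval_X (R := K) φ]
      conv_rhs => rhs; rw [← aeval_X (R := K) φ]
      rw [← map_mul, ← map_mul, mul_comm]
    exact LinearMap.congr_fun this x
  -- main use of induction
  have useIH : ∀ A : Submodule K V, A ≠ ⊤ → ∀ (fA : ∀ a ∈ A, φ a ∈ A) (gA : ∀ a ∈ A, ψ a ∈ A)
      (β : Module.End K A), Function.Injective β →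
      (∀ x, β (φ.restrict fA x) = ψ.restrict gA (β x)) → Rev (φ.restrict fA) (ψ.restrict gA) := by
    intro A hA fA gA β hβ hβ'
    refine ih (finrank K A) (by rw [← hV]; exact Submodule.finrank_lt hA) A rfl _ _ β ?_ hβ hβ'
    ext x
    exact LinearMap.congr_fun h x
  have useIH' : ∀ A : Submodule K V, A ≠ ⊤ → ∀ (fA : ∀ a ∈ A, φ a ∈ A) (gA : ∀ a ∈ A, ψ a ∈ A)
      (_ : ∀ a ∈ A, α a ∈ A), Rev (φ.restrict fA) (ψ.restrict gA) := by
    intro A hA fA gA aA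
    refine useIH A hA fA gA (α.restrict aA) ?_ ?_
    · intro x y hxy
      exact Subtype.ext (hi (congrArg Subtype.val hxy))
    · intro x
      exact Subtype.ext (hα x)
  obtain ⟨k, hk, hk1⟩ := ((LinearMap.eventually_isCompl_ker_pow_range_pow S).and
    (Filter.eventually_ge_atTop 1)).exists
  by_cases hR : LinearMap.range (S ^ k) = ⊥
  · have hS0 : S ^ k = 0 := LinearMap.range_eq_bot.1 hR
    have hS0' : aeval φ (p ^ k * q ^ k) = 0 := by rw [← mul_pow, map_pow]; exact hS0
    rcases hp.isCoprime_or_dvd q with hco | hdvd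
    · have hco' : IsCoprime (p ^ k) (q ^ k) := hco.pow
      have hcompl : IsCompl (LinearMap.ker (aeval φ (p ^ k))) (LinearMap.ker (aeval φ (q ^ k))) := by
        refine ⟨disjoint_ker_aeval_of_isCoprime φ hco', codisjoint_iff.2 ?_⟩
        rw [sup_ker_aeval_eq_ker_aeval_mul_of_coprime φ hco', hS0']
        exact LinearMap.ker_zero
      let e := LinearEquiv.ofInjectiveEndo α hi
      have he : ∀ x, e x = α x := fun x => rfl
      have he' : ∀ x, α (e.symm x) = x := fun x => e.apply_symm_apply x
      have he2 : ∀ x, e.symm (α x) = x := fun x => e.symm_apply_apply x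
      have mA : ∀ a ∈ LinearMap.ker (aeval φ (p ^ k)), α a ∈ LinearMap.ker (aeval φ (q ^ k)) := by
        intro a ha
        rw [LinearMap.mem_ker] at ha ⊢
        rw [← hα1, ha, map_zero]
      have mB : ∀ a ∈ LinearMap.ker (aeval φ (q ^ k)), e.symm a ∈ LinearMap.ker (aeval φ (p ^ k)) := by
        intro a ha
        rw [LinearMap.mem_ker] at ha ⊢
        apply hi
        rw [hα1, he', ha, map_zero]
      have stA : ∀ g : K[X], ∀ a ∈ LinearMap.ker (aeval φ g), φ a ∈ LinearMap.ker (aeval φ g) := by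
        intro g a ha
        rw [LinearMap.mem_ker] at ha ⊢
        rw [← aeval_intertwine φ φ φ (fun _ => rfl), ha, map_zero]
      set σ := LinearMap.ofIsCompl hcompl (α ∘ₗ (LinearMap.ker (aeval φ (p ^ k))).subtype)
        (e.symm.toLinearMap ∘ₗ (LinearMap.ker (aeval φ (q ^ k))).subtype) with hσ
      have l : ∀ a ∈ LinearMap.ker (aeval φ (p ^ k)), σ a = α a := fun a ha => by
        exact LinearMap.ofIsCompl_apply_left hcompl ⟨a, ha⟩
      have r : ∀ a ∈ LinearMap.ker (aeval φ (q ^ k)), σ a = e.symm a := fun a ha => by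
        exact LinearMap.ofIsCompl_apply_right hcompl ⟨a, ha⟩
      refine glue_aux φ ψ σ hcompl ?_ ?_ ?_ ?_
      · intro a ha
        rw [l a ha, r _ (mA a ha), he2]
      · intro a ha
        rw [r a ha, l _ (mB a ha), he']
      · intro a ha
        rw [l a ha, l _ (stA _ a ha), hα]
      · intro a ha
        rw [r a ha, r _ (stA _ a ha)]
        apply hi
        rw [he', hα', he']
    · have hle : ∀ j, LinearMap.ker (aeval φ (p ^ j)) ≤ LinearMap.ker (aeval φ (q ^ j)) := by
        intro j x hx
        obtain ⟨d, hd⟩ := pow_dvd_pow_of_dvd hdvd j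
        rw [LinearMap.mem_ker] at hx ⊢
        rw [hd, mul_comm, map_mul, Module.End.mul_apply, hx, map_zero]
      have heq : ∀ j, LinearMap.ker (aeval φ (p ^ j)) = LinearMap.ker (aeval φ (q ^ j)) := by
        intro j
        apply Submodule.eq_of_le_of_finrank_le (hle j)
        rw [(Submodule.equivMapOfInjective α hi (LinearMap.ker (aeval φ (q ^ j)))).finrank_eq]
        apply Submodule.finrank_mono
        rintro _ ⟨x, hx, rfl⟩
        have hx : aeval φ (q ^ j) x = 0 := hx
        rw [LinearMap.mem_ker, ← hα2, hx, map_zero]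
      have hk2 : ∀ j x, aeval φ (p ^ j) x = 0 ↔ aeval ψ (p ^ j) x = 0 := by
        intro j x
        rw [← hqψn, ← LinearMap.mem_ker, ← LinearMap.mem_ker, heq]
      have hpk : aeval φ (p ^ (k + k)) = 0 := by
        ext x
        rw [pow_add, map_mul, Module.End.mul_apply]
        have : aeval φ (q ^ k) (aeval φ (p ^ k) x) = 0 := by
          rw [← Module.End.mul_apply, ← map_mul, mul_comm, hS0']; rfl
        rw [← LinearMap.mem_ker, ← heq, LinearMap.mem_ker] at this
        exact this
      obtain ⟨U, W, hUW, hU, fU, fW, gU, gW, hrU, β, hβ, hβ'⟩ :=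
        primary φ ψ α h hi hα p hp hk2 _ hpk
      refine glue φ ψ hUW fU fW gU gW hrU (useIH W ?_ fW gW β hβ hβ')
      rintro rfl
      exact hU (by simpa using hUW.inf_eq_bot)
  · have fA : ∀ a ∈ LinearMap.ker (S ^ k), φ a ∈ LinearMap.ker (S ^ k) := by
      intro a ha
      rw [LinearMap.mem_ker] at ha ⊢
      rw [← hSnφ, ha, map_zero]
    have aA : ∀ a ∈ LinearMap.ker (S ^ k), α a ∈ LinearMap.ker (S ^ k) := by
      intro a ha
      rw [LinearMap.mem_ker] at ha ⊢
      rw [← hSnα, ha, map_zero]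
    have fB : ∀ a ∈ LinearMap.range (S ^ k), φ a ∈ LinearMap.range (S ^ k) := by
      rintro _ ⟨x, rfl⟩
      exact ⟨φ x, (hSnφ k x).symm⟩
    have aB : ∀ a ∈ LinearMap.range (S ^ k), α a ∈ LinearMap.range (S ^ k) := by
      rintro _ ⟨x, rfl⟩
      exact ⟨α x, (hSnα k x).symm⟩
    refine glue φ ψ hk fA fB (stab_inv φ ψ h _ fA) (stab_inv φ ψ h _ fB)
      (useIH' _ ?_ _ _ aA) (useIH' _ ?_ _ _ aB)
    · intro ht
      apply hR
      simpa [ht] using hk.inf_eq_bot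
    · intro ht
      have hb : LinearMap.ker (S ^ k) = ⊥ := by simpa [ht] using hk.inf_eq_bot
      apply hx0'
      have : x0 ∈ LinearMap.ker (S ^ k) := by
        obtain ⟨j, rfl⟩ : ∃ j, k = j + 1 := ⟨k - 1, by omega⟩
        rw [LinearMap.mem_ker, pow_succ, Module.End.mul_apply, hS, mul_comm, map_mul,
          Module.End.mul_apply, hx0, map_zero, map_zero]
      rw [hb] at this
      simpa using this

lemma flip_det [FiniteDimensional K V] (h2 : (2:K) ≠ 0) (φ ψ σ : Module.End K V) (h : ψ * φ = 1)
    (hσ : σ * σ = 1) (hσφ : ∀ x, σ (φ x) = ψ (σ x)) (ε : K) (hε : ε * ε = 1) (m : ℕ) (hm : Even m)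
    (hk : finrank K (LinearMap.ker (aeval φ (X - C ε) ^ (m+2))) +
      finrank K (LinearMap.ker (aeval φ (X - C ε) ^ m)) <
      2 * finrank K (LinearMap.ker (aeval φ (X - C ε) ^ (m+1)))) :
    ∃ σ' : Module.End K V, σ' * σ' = 1 ∧ (∀ x, σ' (φ x) = ψ (σ' x)) ∧
      LinearMap.det σ' = - LinearMap.det σ := by
  have h' : φ * ψ = 1 := mul_eq_one_comm.1 h
  have hψφ : ∀ x, ψ (φ x) = x := fun x => LinearMap.congr_fun h x
  have hφψ : ∀ x, φ (ψ x) = x := fun x => LinearMap.congr_fun h' x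
  have hss : ∀ x, σ (σ x) = x := fun x => LinearMap.congr_fun hσ x
  have hσψ : ∀ x, σ (ψ x) = φ (σ x) := rev_swap φ ψ σ h' hσφ
  set p : K[X] := X - C ε with hp
  have hpirr : Irreducible p := irreducible_X_sub_C ε
  set M := aeval φ p with hM
  have hMx : ∀ x, M x = φ x - ε • x := fun x => by simp [hM, hp]
  have hMψ : ∀ x, aeval ψ p x = ψ x - ε • x := fun x => by simp [hp]
  set E : Module.End K V := (-ε) • ψ with hE
  set F : Module.End K V := (-ε) • φ with hF
  have hEM : aeval ψ p = E * M := by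
    ext x
    rw [hMψ, Module.End.mul_apply, hMx, hE, LinearMap.smul_apply, map_sub, map_smul, hψφ, smul_sub,
      smul_smul, neg_mul, hε]
    simp only [neg_smul, one_smul]; abel
  have hME : aeval ψ p = M * E := by
    ext x
    rw [hMψ, Module.End.mul_apply, hMx, hE, LinearMap.smul_apply, map_smul, hφψ,
      smul_smul, mul_neg, hε]
    simp only [neg_smul, one_smul]; abel
  have hFM : M = F * aeval ψ p := by
    ext x
    rw [hMx, Module.End.mul_apply, hMψ, hF, LinearMap.smul_apply, map_sub, map_smul, hφψ, smul_sub,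
      smul_smul, neg_mul, hε]
    simp only [neg_smul, one_smul]; abel
  have hMF : M = aeval ψ p * F := by
    ext x
    rw [hMx, Module.End.mul_apply, hMψ, hF, LinearMap.smul_apply, map_smul, hψφ,
      smul_smul, mul_neg, hε]
    simp only [neg_smul, one_smul]; abel
  have cEM : Commute E M := by rw [Commute, SemiconjBy, ← hEM, ← hME]
  have cFM : Commute F (aeval ψ p) := by rw [Commute, SemiconjBy, ← hFM, ← hMF]
  have eEM : ∀ j, aeval ψ p ^ j = E ^ j * M ^ j := fun j => by rw [hEM, cEM.mul_pow]
  have eME : ∀ j, aeval ψ p ^ j = M ^ j * E ^ j := fun j => by rw [hME, cEM.symm.mul_pow]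
  have eFM : ∀ j, M ^ j = F ^ j * aeval ψ p ^ j := fun j => by
    conv_lhs => rw [hFM]
    rw [cFM.mul_pow]
  have hσM : ∀ j x, σ ((M ^ j) x) = (aeval ψ p ^ j) (σ x) := fun j x => by
    rw [hM, ← map_pow, ← map_pow]; exact aeval_intertwine φ ψ σ hσφ _ x
  have kerσ : ∀ j x, (M ^ j) x = 0 → (M ^ j) (σ x) = 0 := fun j x hx => by
    rw [eFM, Module.End.mul_apply, ← hσM, hx, map_zero, map_zero]
  -- choose v0
  obtain ⟨v0, hv0, hv0'⟩ : ∃ v0, v0 ∈ LinearMap.ker (M ^ (m+1)) ∧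
      v0 ∉ LinearMap.ker (M ^ m) ⊔ (LinearMap.ker (M ^ (m+2))).map M := by
    by_contra hcon
    push Not at hcon
    have hle : LinearMap.ker (M ^ (m+1)) ≤ LinearMap.ker (M ^ m) ⊔ (LinearMap.ker (M ^ (m+2))).map M :=
      hcon
    have hkk : ∀ j, LinearMap.ker (M ^ (j+1)) ⊓ LinearMap.ker M = LinearMap.ker M := fun j => by
      apply inf_eq_right.2
      intro x hx
      rw [LinearMap.mem_ker] at hx ⊢
      rw [pow_succ, Module.End.mul_apply, hx, map_zero]
    have k1 := finKey M (LinearMap.ker (M ^ (m+2)))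
    have k2 := finKey M (LinearMap.ker (M ^ (m+1)))
    rw [hkk] at k1 k2
    have k3 := Submodule.finrank_sup_add_finrank_inf_eq (LinearMap.ker (M ^ m)) ((LinearMap.ker (M ^ (m+2))).map M)
    have k4 := Submodule.finrank_mono hle
    have k5 : finrank K ((LinearMap.ker (M ^ (m+1))).map M) ≤
        finrank K (LinearMap.ker (M ^ m) ⊓ (LinearMap.ker (M ^ (m+2))).map M : Submodule K V) := by
      apply Submodule.finrank_mono
      rintro _ ⟨x, hx, rfl⟩
      have hx : (M ^ (m+1)) x = 0 := hx
      refine ⟨?_, x, ?_, rfl⟩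
      · show (M ^ m) (M x) = 0
        rw [← Module.End.mul_apply, ← pow_succ, hx]
      · show (M ^ (m+2)) x = 0
        rw [pow_succ', Module.End.mul_apply, hx, map_zero]
    omega
  have hv0 : (M ^ (m+1)) v0 = 0 := hv0
  obtain ⟨s, v, hs, hsv, hvk, hvn⟩ : ∃ (s : K) (v : V), s * s = 1 ∧ σ v = s • v ∧
      (M ^ (m+1)) v = 0 ∧ v ∉ LinearMap.ker (M ^ m) ⊔ (LinearMap.ker (M ^ (m+2))).map M := by
    by_cases hplus : v0 + σ v0 ∈ LinearMap.ker (M ^ m) ⊔ (LinearMap.ker (M ^ (m+2))).map M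
    · refine ⟨-1, v0 - σ v0, by ring, ?_, ?_, ?_⟩
      · rw [map_sub, hss]; simp
      · rw [map_sub, hv0, kerσ _ _ hv0, sub_zero]
      · intro hminus
        apply hv0'
        have := Submodule.smul_mem _ (2:K)⁻¹ (Submodule.add_mem _ hplus hminus)
        rwa [add_add_sub_cancel, ← two_smul K v0, smul_smul, inv_mul_cancel₀ h2, one_smul] at this
    · refine ⟨1, v0 + σ v0, by ring, ?_, ?_, hplus⟩
      · rw [map_add, hss]; simp [add_comm]
      · rw [map_add, hv0, kerσ _ _ hv0, add_zero]
  set u := (M ^ m) v with hu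
  have hur : u ∉ LinearMap.range (M ^ (m+1)) := by
    rintro ⟨w, hw⟩
    apply hvn
    have e1 : v = (v - M w) + M w := by abel
    rw [e1]
    refine Submodule.add_mem_sup ?_ ⟨w, ?_, rfl⟩
    · show (M ^ m) (v - M w) = 0
      rw [map_sub, ← Module.End.mul_apply (M ^ m) M, ← pow_succ, hw, hu, sub_self]
    · show (M ^ (m+2)) w = 0
      rw [pow_succ', Module.End.mul_apply, hw, hu, ← Module.End.mul_apply, ← pow_succ', hvk]
  obtain ⟨ℓ0, hl0, hl0'⟩ := Submodule.exists_le_ker_of_notMem hur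
  have hl0' : ∀ x, ℓ0 ((M ^ (m+1)) x) = 0 := fun x => hl0' ⟨x, rfl⟩
  have hφu : φ u = ε • u := by
    have : M u = 0 := by rw [hu, ← Module.End.mul_apply, ← pow_succ', hvk]
    rwa [hMx, sub_eq_zero] at this
  have hψu : ψ u = ε • u := by
    have : ε • (φ (ψ u)) = ε • u := by rw [hφψ]
    have e2 : ψ (φ u) = ε • ψ u := by rw [hφu, map_smul]
    rw [hψφ] at e2
    conv_rhs => rw [e2]
    rw [smul_smul, hε, one_smul]
  have hEu : E u = - u := by
    rw [hE, LinearMap.smul_apply, hψu, smul_smul, neg_mul, hε]; simp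
  have hEm : (E ^ m) u = u := by
    obtain ⟨t, ht⟩ := hm
    rw [← two_mul] at ht
    rw [ht, pow_mul]
    clear_value u
    clear hk hu hur ht
    induction t with
    | zero => simp
    | succ t iht =>
      rw [pow_succ, Module.End.mul_apply, pow_two, Module.End.mul_apply, hEu, map_neg, hEu, neg_neg,
        ← pow_two, iht]
  have hσu : σ u = s • u := by
    rw [hu, hσM, eEM, hsv, map_smul, Module.End.mul_apply, ← hu, hEm]
  set ℓ : V →ₗ[K] K := ℓ0 + s • (ℓ0 ∘ₗ σ) with hℓ
  have hℓx : ∀ x, ℓ x = ℓ0 x + s * ℓ0 (σ x) := fun x => rfl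
  have hℓσ : ∀ x, ℓ (σ x) = s * ℓ x := fun x => by
    rw [hℓx, hℓx, hss, mul_add, ← mul_assoc, hs]; ring
  have hℓu : ℓ u ≠ 0 := by
    rw [hℓx, hσu, map_smul, smul_eq_mul, ← mul_assoc, hs, one_mul, ← two_mul]
    exact mul_ne_zero h2 hl0
  have hℓr : ∀ x, ℓ ((M ^ (m+1)) x) = 0 := fun x => by
    rw [hℓx, hl0', hσM, eME, Module.End.mul_apply, hl0']; simp
  have hpow : ∀ j, aeval φ (p ^ j) = M ^ j := fun j => by rw [map_pow]
  have c1 := splitting φ p hpirr m v ℓ (by rw [hpow]; exact hvk) (by rw [hpow]; exact hℓr)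
    (by rw [hpow]; exact hℓu)
  have hdim := finrank_ev φ p hpirr m v (by rw [hpow]; exact hvk)
    (by rw [hpow]; intro h0; apply hℓu; rw [hu, h0, map_zero])
  rw [hp, natDegree_X_sub_C, mul_one] at hdim
  have sU := ev_stab φ v
  have sU' := stab_inv φ ψ h _ sU
  have sW := Wl_stab φ ℓ
  have sW' := stab_inv φ ψ h _ sW
  have hvU : v ∈ LinearMap.range (ev φ v) := ⟨1, by simp [ev_apply]⟩
  have tU : ∀ a ∈ LinearMap.range (ev φ v), σ a ∈ LinearMap.range (ev φ v) := by
    rintro _ ⟨g, rfl⟩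
    rw [ev_apply, aeval_intertwine φ ψ σ hσφ, hsv, map_smul]
    exact Submodule.smul_mem _ _ (aeval_stab ψ _ sU' g v hvU)
  have tW : ∀ a ∈ Wl φ ℓ, σ a ∈ Wl φ ℓ := by
    intro a ha g
    rw [← aeval_intertwine ψ φ σ hσψ, hℓσ]
    have := aeval_stab ψ _ sW' g a ha 1
    rw [map_one] at this
    rw [show ℓ (aeval ψ g a) = 0 from this, mul_zero]
  set U := LinearMap.range (ev φ v) with hU
  set W := Wl φ ℓ with hW
  set ρ : Module.End K V := LinearMap.ofIsCompl c1 (-U.subtype) W.subtype with hρ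
  have l : ∀ a ∈ U, ρ a = -a := fun a ha => LinearMap.ofIsCompl_apply_left c1 ⟨a, ha⟩
  have r : ∀ a ∈ W, ρ a = a := fun a ha => LinearMap.ofIsCompl_apply_right c1 ⟨a, ha⟩
  have ρρ : ρ * ρ = 1 := LinearMap.ext fun x => ext_compl c1 (ρ * ρ) 1
    (fun a ha => by
      show ρ (ρ a) = a
      rw [l a ha, map_neg, l a ha, neg_neg])
    (fun a ha => by
      show ρ (ρ a) = a
      rw [r a ha, r a ha]) x
  have ρσ : ρ * σ = σ * ρ := LinearMap.ext fun x => ext_compl c1 (ρ * σ) (σ * ρ)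
    (fun a ha => by
      show ρ (σ a) = σ (ρ a)
      rw [l a ha, l _ (tU a ha), map_neg])
    (fun a ha => by
      show ρ (σ a) = σ (ρ a)
      rw [r a ha, r _ (tW a ha)]) x
  have ρφ : ∀ x, ρ (φ x) = φ (ρ x) := fun x => ext_compl c1 (ρ * φ) (φ * ρ)
    (fun a ha => by
      show ρ (φ a) = φ (ρ a)
      rw [l a ha, l _ (sU a ha), map_neg])
    (fun a ha => by
      show ρ (φ a) = φ (ρ a)
      rw [r a ha, r _ (sW a ha)]) x
  have hkerρ : LinearMap.ker (ρ - 1) = W := by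
    apply le_antisymm
    · intro x hx
      have hx : ρ x = x := by
        rw [LinearMap.mem_ker, LinearMap.sub_apply, sub_eq_zero] at hx; exact hx
      have : x ∈ U ⊔ W := by rw [c1.sup_eq_top]; trivial
      obtain ⟨a, ha, b, hb, rfl⟩ := Submodule.mem_sup.1 this
      rw [map_add, l a ha, r b hb] at hx
      have h0 : a = -a := (add_right_cancel hx).symm
      have : (2:K) • a = 0 := by rw [two_smul]; nth_rewrite 1 [h0]; simp
      rw [(smul_eq_zero.1 this).resolve_left h2, zero_add]
      exact hb
    · intro x hx
      rw [LinearMap.mem_ker, LinearMap.sub_apply, r x hx]; simp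
  have hdetρ : LinearMap.det ρ = -1 := by
    rw [detInv ρ ρρ, hkerρ]
    have := Submodule.finrank_add_eq_of_isCompl c1
    have e : finrank K V - finrank K W = m + 1 := by omega
    rw [e]
    exact Odd.neg_one_pow hm.add_one
  refine ⟨σ * ρ, ?_, ?_, ?_⟩
  · calc σ * ρ * (σ * ρ) = σ * (ρ * σ) * ρ := by simp only [mul_assoc]
      _ = (σ * σ) * (ρ * ρ) := by rw [ρσ]; simp only [mul_assoc]
      _ = 1 := by rw [hσ, ρρ, one_mul]
  · intro x
    show σ (ρ (φ x)) = ψ (σ (ρ x))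
    rw [ρφ, hσφ]
  · rw [map_mul, hdetρ]; simp

lemma noOdd [FiniteDimensional K V] (h2 : (2:K) ≠ 0) (φ ψ : Module.End K V) (h : ψ * φ = 1)
    (hno : ∀ d, Odd d → edMult φ (X - 1) d = 0 ∧ edMult φ (X + 1) d = 0) :
    ∀ d, Odd d → 2 * finrank K (LinearMap.ker ((φ - ψ) ^ d)) ≤
      finrank K (LinearMap.ker ((φ - ψ) ^ (d+1))) + finrank K (LinearMap.ker ((φ - ψ) ^ (d-1))) := by
  have h' : φ * ψ = 1 := mul_eq_one_comm.1 h
  have hco : IsCoprime (X - 1 : K[X]) (X + 1) := by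
    refine ⟨- C (2:K)⁻¹, C (2:K)⁻¹, ?_⟩
    have : C (2:K)⁻¹ * 2 = (1 : K[X]) := by
      rw [show (2 : K[X]) = C 2 from rfl, ← C_mul, inv_mul_cancel₀ h2, C_1]
    linear_combination this
  have hN : φ - ψ = ψ * aeval φ ((X - 1) * (X + 1) : K[X]) := by
    have : aeval φ ((X - 1) * (X + 1) : K[X]) = φ * φ - 1 := by
      simp only [map_mul, map_sub, map_add, aeval_X, map_one]
      noncomm_ring
    rw [this, mul_sub, ← mul_assoc, h, one_mul, mul_one]
  have hcm : Commute ψ (aeval φ ((X - 1) * (X + 1) : K[X])) := by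
    obtain ⟨r, hr⟩ := inv_poly φ ψ h
    rw [← hr, Commute, SemiconjBy, ← map_mul, ← map_mul, mul_comm]
  have hψinj : ∀ d x, (ψ ^ d) x = 0 → x = 0 := by
    intro d x hx
    have hc : Commute φ ψ := by rw [Commute, SemiconjBy, h, h']
    have : φ ^ d * ψ ^ d = 1 := by rw [← hc.mul_pow, h', one_pow]
    have := LinearMap.congr_fun this x
    rw [Module.End.mul_apply, hx, map_zero] at this
    exact this.symm
  have hk : ∀ d, LinearMap.ker ((φ - ψ) ^ d) = LinearMap.ker (aeval φ ((X - 1) ^ d * (X + 1) ^ d : K[X])) := by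
    intro d
    ext x
    rw [LinearMap.mem_ker, LinearMap.mem_ker, hN, hcm.mul_pow, ← mul_pow, map_pow, Module.End.mul_apply]
    constructor
    · exact hψinj d _
    · intro h0; rw [h0, map_zero]
  have hf : ∀ d, finrank K (LinearMap.ker ((φ - ψ) ^ d)) =
      finrank K (LinearMap.ker (aeval φ (X - 1 : K[X]) ^ d)) +
      finrank K (LinearMap.ker (aeval φ (X + 1 : K[X]) ^ d)) := by
    intro d
    have hco' : IsCoprime ((X - 1 : K[X]) ^ d) ((X + 1) ^ d) := hco.pow
    rw [hk, ← sup_ker_aeval_eq_ker_aeval_mul_of_coprime φ hco', ← map_pow, ← map_pow,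
      ← Submodule.finrank_sup_add_finrank_inf_eq,
      (disjoint_ker_aeval_of_isCoprime φ hco').eq_bot, finrank_bot, add_zero]
  intro d hd
  obtain ⟨e1, e2⟩ := hno d hd
  have n1 : (X - 1 : K[X]).natDegree = 1 := by
    rw [← C_1]; exact natDegree_X_sub_C 1
  have n2 : (X + 1 : K[X]).natDegree = 1 := by
    rw [← C_1]; exact natDegree_X_add_C 1
  rw [edMult, n1, Nat.div_one] at e1
  rw [edMult, n2, Nat.div_one] at e2
  rw [hf, hf, hf]
  omega

/-- existence of a reversing involution of determinant one -/
lemma exists_det_one {K : Type*} {V : Type u} [Field K] [AddCommGroup V] [Module K V]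
    [FiniteDimensional K V] (h2 : (2:K) ≠ 0) (φ ψ α : Module.End K V)
    (h : ψ * φ = 1) (hi : Function.Injective α) (hα : ∀ x, α (φ x) = ψ (α x))
    (hc : Module.finrank K V % 4 = 2 →
        ∃ d : ℕ, Odd d ∧ (edMult φ (X - 1) d ≠ 0 ∨ edMult φ (X + 1) d ≠ 0)) :
    ∃ σ : Module.End K V, σ * σ = 1 ∧ (∀ x, σ (φ x) = ψ (σ x)) ∧ LinearMap.det σ = 1 := by
  obtain ⟨σ, hσ, hσφ⟩ := exists_rev _ V rfl φ ψ α h hi hα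
  have hd : LinearMap.det σ = 1 ∨ LinearMap.det σ = -1 := by
    rw [← mul_self_eq_one_iff, ← map_mul, hσ, map_one]
  rcases hd with hd | hd
  · exact ⟨σ, hσ, hσφ, hd⟩
  by_cases hodd : ∃ d : ℕ, Odd d ∧ (edMult φ (X - 1) d ≠ 0 ∨ edMult φ (X + 1) d ≠ 0)
  · obtain ⟨d, ⟨t, rfl⟩, hdd⟩ := hodd
    have n1 : (X - 1 : K[X]).natDegree = 1 := by
      rw [← C_1]; exact natDegree_X_sub_C 1
    have n2 : (X + 1 : K[X]).natDegree = 1 := by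
      rw [← C_1]; exact natDegree_X_add_C 1
    rw [edMult, edMult, n1, n2, Nat.div_one, Nat.div_one, Nat.add_sub_cancel] at hdd
    rw [show 2 * t + 1 + 1 = 2 * t + 2 from rfl] at hdd
    rcases hdd with hdd | hdd
    · obtain ⟨σ', a, b, c⟩ := flip_det h2 φ ψ σ h hσ hσφ 1 (by ring) (2 * t) (even_two_mul t)
        (by rw [C_1]; omega)
      exact ⟨σ', a, b, by rw [c, hd, neg_neg]⟩
    · obtain ⟨σ', a, b, c⟩ := flip_det h2 φ ψ σ h hσ hσφ (-1) (by ring) (2 * t) (even_two_mul t)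
        (by rw [C_neg, C_1, sub_neg_eq_add]; omega)
      exact ⟨σ', a, b, by rw [c, hd, neg_neg]⟩
  · rcases Nat.even_or_odd (finrank K V) with he | ho
    · exfalso
      have hno := noOdd h2 φ ψ h (by
        intro d hd
        by_contra hcon
        exact hodd ⟨d, hd, by tauto⟩)
      have hb := balanced h2 σ (φ - ψ) hσ (by
        ext x
        have := rev_swap φ ψ σ (mul_eq_one_comm.1 h) hσφ
        simp [hσφ, this]) hno
      have h4 : finrank K V % 4 = 0 := by
        have : finrank K V % 4 ≠ 2 := fun h => hodd (hc h)
        obtain ⟨t, ht⟩ := he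
        omega
      have hone : LinearMap.det σ = 1 := by
        rw [detInv σ hσ]
        apply Even.neg_one_pow
        rw [Nat.even_iff]
        omega
      rw [hd] at hone
      apply h2
      linear_combination -hone
    · refine ⟨-σ, by rw [neg_mul_neg, hσ], fun x => by simp [hσφ], ?_⟩
      rw [← neg_one_smul K σ, LinearMap.det_smul, hd, ho.neg_one_pow]; ring


/-- Let `φ ∈ SL(V)` be conjugate to its inverse in `GL(V)`. Then `φ` is a
product of two involutions of `SL(V)` iff (when `dim V ≡ 2 (mod 4)`) `φ` has an elementary
divisor `(x ± 1)^d` of odd degree `d`. -/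
theorem stmt19 [FiniteDimensional K V] (hK : ringChar K ≠ 2)
    (φ : V ≃ₗ[K] V) (hdet : LinearMap.det (φ : V →ₗ[K] V) = 1)
    (hrev : ∃ α : V ≃ₗ[K] V, α * φ * α⁻¹ = φ⁻¹) :
    ((Module.finrank K V % 4 = 2 →
        ∃ d : ℕ, Odd d ∧ (edMult (φ : V →ₗ[K] V) (X - 1) d ≠ 0 ∨
          edMult (φ : V →ₗ[K] V) (X + 1) d ≠ 0)) ↔
      ∃ σ' τ' : V ≃ₗ[K] V, LinearMap.det (σ' : V →ₗ[K] V) = 1 ∧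
        LinearMap.det (τ' : V →ₗ[K] V) = 1 ∧ σ' ^ 2 = 1 ∧ τ' ^ 2 = 1 ∧ φ = σ' * τ') := by
  have h2 : (2:K) ≠ 0 := Ring.two_ne_zero hK
  set φe : Module.End K V := (φ : V →ₗ[K] V) with hφe
  set ψe : Module.End K V := (φ.symm : V →ₗ[K] V) with hψe
  have h : ψe * φe = 1 := by
    ext x; simp [hφe, hψe]
  constructor
  · intro hc
    obtain ⟨α, hα⟩ := hrev
    have hα2 : α * φ = φ⁻¹ * α := by
      rw [← hα]; group
    obtain ⟨σ, hσ, hσφ, hd⟩ := exists_det_one h2 φe ψe (α : V →ₗ[K] V) h α.injective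
      (fun x => LinearEquiv.congr_fun hα2 x) hc
    have hs : ∀ x, σ (σ x) = x := fun x => LinearMap.congr_fun hσ x
    let s : V ≃ₗ[K] V := LinearEquiv.ofLinearMap σ σ hσ hσ
    have hsx : ∀ x, s x = σ x := fun x => rfl
    have hs1 : (s : V →ₗ[K] V) = σ := by ext x; rfl
    refine ⟨s, s * φ, ?_, ?_, ?_, ?_, ?_⟩
    · rw [hs1, hd]
    · rw [LinearEquiv.coe_toLinearMap_mul, map_mul, hs1, hd, one_mul, hdet]
    · apply LinearEquiv.ext; intro x
      rw [pow_two]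
      exact hs x
    · apply LinearEquiv.ext; intro x
      rw [pow_two]
      show σ (φe (σ (φe x))) = x
      rw [hσφ, hs]
      exact φ.symm_apply_apply x
    · apply LinearEquiv.ext; intro x
      exact (hs (φ x)).symm
  · rintro ⟨s, t, hds, hdt, hs, ht, hst⟩ h4
    by_contra hodd
    have hσ : (s : V →ₗ[K] V) * (s : V →ₗ[K] V) = 1 := by
      rw [pow_two] at hs
      ext x; exact LinearEquiv.congr_fun hs x
    have hrv : s * φ = φ⁻¹ * s := by
      rw [pow_two] at hs ht
      rw [hst, mul_inv_rev, eq_inv_of_mul_eq_one_left hs |>.symm, eq_inv_of_mul_eq_one_left ht |>.symm,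
        ← mul_assoc, hs, mul_assoc, hs, one_mul, mul_one]
    have hσφ : ∀ x, (s : V →ₗ[K] V) (φe x) = ψe ((s : V →ₗ[K] V) x) :=
      fun x => LinearEquiv.congr_fun hrv x
    have hno := noOdd h2 φe ψe h (by
      intro d hd
      by_contra hcon
      exact hodd ⟨d, hd, by tauto⟩)
    have hb := balanced h2 (s : V →ₗ[K] V) (φe - ψe) hσ (by
      apply LinearMap.ext
      intro x
      have h1 := rev_swap φe ψe (s : V →ₗ[K] V) (mul_eq_one_comm.1 h) hσφ x
      have h0 := hσφ x
      simp only [Module.End.mul_apply, LinearMap.neg_apply, LinearMap.sub_apply, map_sub, h0, h1, neg_sub]) hno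
    have hm : LinearMap.det (s : V →ₗ[K] V) = -1 := by
      rw [detInv (s : V →ₗ[K] V) hσ]
      apply Odd.neg_one_pow
      rw [Nat.odd_iff]
      omega
    rw [hds] at hm
    apply h2
    linear_combination hm

end Biref
end
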